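/- arXiv:1107.4378 — 2 statements merged into one kernel-verified Lean document; each statement's English description precedes it below -/
import Mathlib

section
/- Fix a constant ε > 0. There exist constants γ > 0, c > 0 and a threshold n₀ (all depending only on ε) such that the following holds for all integers n ≥ n₀ and m with (1+ε)·n ≤ m. Let i* be the smallest i ≥ 1 such that E[X_i] < n^{2/3}, and let X_* be the number of vertices of the random cuckoo graph with n edges on parts of size m lying in connected components with at least i* edges. Then Pr(X_* ≥ γ·n^{2/3}) ≤ n^{−c·log n}. -/
open Classical

/-- Adjacency: item `x` gives an edge from left vertex `h₀ x` to right vertex `h₁ x`. -/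
def cuckooAdj (n m : ℕ) (h₀ h₁ : Fin n → Fin m) (a b : Fin m ⊕ Fin m) : Prop :=
  ∃ x : Fin n, a = Sum.inl (h₀ x) ∧ b = Sum.inr (h₁ x)

/-- Connectivity in the cuckoo graph: equivalence generated by adjacency. -/
def cuckooConn (n m : ℕ) (h₀ h₁ : Fin n → Fin m) : (Fin m ⊕ Fin m) → (Fin m ⊕ Fin m) → Prop :=
  Relation.EqvGen (cuckooAdj n m h₀ h₁)

/-- `C(v)`: number of edges (items, with multiplicity) in the component of `v`. -/
noncomputable def cuckooC (n m : ℕ) (h₀ h₁ : Fin n → Fin m) (v : Fin m ⊕ Fin m) : ℕ :=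
  Nat.card {x : Fin n // cuckooConn n m h₀ h₁ (Sum.inl (h₀ x)) v}

/-- `V(v)`: number of vertices in the component of `v`. -/
noncomputable def cuckooV (n m : ℕ) (h₀ h₁ : Fin n → Fin m) (v : Fin m ⊕ Fin m) : ℕ :=
  Nat.card {u : Fin m ⊕ Fin m // cuckooConn n m h₀ h₁ u v}

/-- `B_v`: cyclotomic number of the component of `v`, `C(v) − V(v) + 1`. -/
noncomputable def cuckooB (n m : ℕ) (h₀ h₁ : Fin n → Fin m) (v : Fin m ⊕ Fin m) : ℕ :=
  cuckooC n m h₀ h₁ v + 1 - cuckooV n m h₀ h₁ v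

/-- The sample space: a pair of hash functions chosen uniformly at random. -/
abbrev HashPair (n m : ℕ) := (Fin n → Fin m) × (Fin n → Fin m)

/-- Probability of an event under uniformly random hash functions. -/
noncomputable def cuckooPr (n m : ℕ) (E : HashPair n m → Prop) : ℝ :=
  (Nat.card {ω : HashPair n m // E ω} : ℝ) / (Nat.card (HashPair n m) : ℝ)

/-- Expectation of a real random variable under uniformly random hash functions. -/
noncomputable def cuckooE (n m : ℕ) (f : HashPair n m → ℝ) : ℝ :=
  (∑ ω : HashPair n m, f ω) / (Nat.card (HashPair n m) : ℝ)

/-- `X_i`: number of vertices lying in components with exactly `i` edges. -/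
noncomputable def cuckooX (n m : ℕ) (h₀ h₁ : Fin n → Fin m) (i : ℕ) : ℕ :=
  Nat.card {v : Fin m ⊕ Fin m // cuckooC n m h₀ h₁ v = i}

/-- The setoid of connected components. -/
def cuckooSetoid (n m : ℕ) (h₀ h₁ : Fin n → Fin m) : Setoid (Fin m ⊕ Fin m) :=
  ⟨cuckooConn n m h₀ h₁, Relation.EqvGen.is_equivalence _⟩

/-- `ē(G) = ∑_H max(e(H),0)`, the total excess over all components
(`ℕ`-subtraction realizes the `max` with `0`). -/
noncomputable def cuckooEbar (n m : ℕ) (h₀ h₁ : Fin n → Fin m) : ℕ :=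
  ∑ᶠ c : Quotient (cuckooSetoid n m h₀ h₁),
    (Nat.card {x : Fin n // Quotient.mk (cuckooSetoid n m h₀ h₁) (Sum.inl (h₀ x)) = c}
      - Nat.card {u : Fin m ⊕ Fin m // Quotient.mk (cuckooSetoid n m h₀ h₁) u = c})

namespace Ck

/-- item `x` is reachable from the vertex sets `A0`, `A1`. -/
def Rch {ι α β : Type} (h0 : ι → α) (h1 : ι → β) (A0 : Set α) (A1 : Set β) (x : ι) : Prop :=
  ∀ (S0 : Set α) (S1 : Set β), (∀ y, h0 y ∈ S0 ↔ h1 y ∈ S1) → A0 ⊆ S0 → A1 ⊆ S1 → h0 x ∈ S0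

lemma Rch_swap {ι α β : Type} (h0 : ι → α) (h1 : ι → β) (A0 : Set α) (A1 : Set β) (x : ι) :
    Rch h0 h1 A0 A1 x ↔ Rch h1 h0 A1 A0 x := by
  constructor
  · intro h S1 S0 hS a1 a0
    exact (hS x).2 (h S0 S1 (fun y => (hS y).symm) a0 a1)
  · intro h S0 S1 hS a0 a1
    exact (hS x).2 (h S1 S0 (fun y => (hS y).symm) a1 a0)

/-- number of reachable items -/
noncomputable def Ec {ι α β : Type} [Fintype ι] (h0 : ι → α) (h1 : ι → β)
    (A0 : Finset α) (A1 : Finset β) : ℕ :=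
  (Finset.univ.filter (fun x => Rch h0 h1 (A0 : Set α) (A1 : Set β) x)).card

lemma Ec_swap {ι α β : Type} [Fintype ι] (h0 : ι → α) (h1 : ι → β)
    (A0 : Finset α) (A1 : Finset β) : Ec h0 h1 A0 A1 = Ec h1 h0 A1 A0 := by
  unfold Ec
  congr 1
  ext x
  simp only [Finset.mem_filter, Finset.mem_univ, true_and]
  exact Rch_swap _ _ _ _ _

lemma Ec_empty {ι α β : Type} [Fintype ι] (h0 : ι → α) (h1 : ι → β) :
    Ec h0 h1 (∅ : Finset α) (∅ : Finset β) = 0 := by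
  unfold Ec
  rw [Finset.card_eq_zero, Finset.filter_eq_empty_iff]
  intro x _ h
  have := h ∅ ∅ (by simp) (by simp) (by simp)
  simp at this

/-- glue the exploration data together -/
def glue0 {ι α : Type} [DecidableEq ι] (u : α) (D : Finset ι) (k : {x // x ∉ D} → {a : α // a ≠ u}) :
    ι → α := fun x => if h : x ∈ D then u else (k ⟨x, h⟩ : α)

def glue1 {ι β : Type} [DecidableEq ι] (D : Finset ι) (g : {x // x ∈ D} → β)
    (k : {x // x ∉ D} → β) : ι → β := fun x => if h : x ∈ D then g ⟨x, h⟩ else k ⟨x, h⟩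

lemma Ec_glue {ι α β : Type} [Fintype ι] [DecidableEq ι] [DecidableEq α] [DecidableEq β]
    (A0 : Finset α) (A1 : Finset β) (u : α) (hu : u ∈ A0) (D : Finset ι)
    (k : {x // x ∉ D} → {a : α // a ≠ u}) (g : {x // x ∈ D} → β) (k1 : {x // x ∉ D} → β) :
    Ec (glue0 u D k) (glue1 D g k1) A0 A1
      = D.card + Ec k k1 (A0.subtype (fun a => a ≠ u)) (A1 ∪ Finset.univ.image g) := by
  have key : ∀ x (hx : x ∉ D), Rch (glue0 u D k) (glue1 D g k1) (A0 : Set α) (A1 : Set β) x ↔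
      Rch k k1 (A0.subtype (fun a => a ≠ u) : Set {a // a ≠ u})
        ((A1 ∪ Finset.univ.image g : Finset β) : Set β) ⟨x, hx⟩ := by
    intro x hx
    constructor
    · intro h S0 S1 hS a0 a1
      have := h (insert u (Subtype.val '' S0)) S1 ?_ ?_ ?_
      · simp only [glue0, hx, dite_false] at this
        rcases this with h1 | ⟨b, hb, hb'⟩
        · exact absurd h1 (k ⟨x, hx⟩).2
        · rwa [← Subtype.ext hb']
      · intro y
        by_cases hy : y ∈ D
        · simp only [glue0, glue1, hy, dite_true, Set.mem_insert_iff, true_or, true_iff]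
          apply a1
          simp
        · simp only [glue0, glue1, hy, dite_false]
          rw [← hS ⟨y, hy⟩]
          constructor
          · rintro (h1 | ⟨b, hb, hb'⟩)
            · exact absurd h1 (k ⟨y, hy⟩).2
            · rwa [← Subtype.ext hb']
          · intro h1; right; exact ⟨_, h1, rfl⟩
      · intro a ha
        by_cases hau : a = u
        · left; exact hau
        · right; exact ⟨⟨a, hau⟩, a0 (by simpa using ha), rfl⟩
      · intro b hb; apply a1; simp at hb ⊢; left; exact hb
    · intro h S0 S1 hS a0 a1
      have := h {a | (a : α) ∈ S0} S1 ?_ ?_ ?_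
      · simpa [glue0, hx] using this
      · intro y
        have := hS y
        simpa [glue0, glue1, y.2] using this
      · intro a ha; apply a0; simpa using ha
      · intro b hb
        simp only [Finset.coe_union, Set.mem_union, Finset.coe_image, Finset.coe_univ, Set.image_univ, Set.mem_range] at hb
        rcases hb with hb | ⟨y, rfl⟩
        · exact a1 hb
        · have := (hS y).1
          simp only [glue0, glue1, y.2, dite_true] at this
          exact this (a0 hu)
  have hD : ∀ x ∈ D, Rch (glue0 u D k) (glue1 D g k1) (A0 : Set α) (A1 : Set β) x := by
    intro x hx S0 S1 hS a0 a1
    simp only [glue0, hx, dite_true]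
    exact a0 hu
  unfold Ec
  rw [← Finset.card_filter_add_card_filter_not (s := Finset.univ.filter _) (fun x => x ∈ D)]
  congr 1
  · congr 1
    ext x
    simp only [Finset.mem_filter, Finset.mem_univ, true_and]
    exact ⟨fun h => h.2, fun h => ⟨hD x h, h⟩⟩
  · rw [← Finset.card_map (Function.Embedding.subtype (fun x => x ∉ D))]
    congr 1
    ext x
    simp only [Finset.mem_filter, Finset.mem_univ, true_and, Finset.mem_map, Function.Embedding.subtype_apply]
    constructor
    · rintro ⟨h1, h2⟩
      exact ⟨⟨x, h2⟩, (key x h2).1 h1, rfl⟩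
    · rintro ⟨⟨y, hy⟩, h1, rfl⟩
      exact ⟨(key y hy).2 h1, hy⟩

lemma sum_glue1 {ι β : Type} [Fintype ι] [DecidableEq ι] [Fintype β] (D : Finset ι)
    (f : (ι → β) → ℝ) :
    ∑ h, f h = ∑ g : {x // x ∈ D} → β, ∑ k : {x // x ∉ D} → β, f (glue1 D g k) := by
  rw [← Fintype.sum_prod_type']
  apply Fintype.sum_equiv (Equiv.piEquivPiSubtypeProd (fun x => x ∈ D) (fun _ => β))
  intro h
  congr 1
  ext x
  simp [glue1, Equiv.piEquivPiSubtypeProd]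

lemma sum_glue0 {ι α : Type} [Fintype ι] [DecidableEq ι] [Fintype α] [DecidableEq α] (u : α)
    (f : (ι → α) → ℝ) :
    ∑ h, f h = ∑ D : Finset ι, ∑ k : {x // x ∉ D} → {a : α // a ≠ u}, f (glue0 u D k) := by
  rw [← Finset.sum_fiberwise (s := Finset.univ) (g := fun h : ι → α => Finset.univ.filter (fun x => h x = u))]
  apply Finset.sum_congr rfl
  intro D _
  symm
  apply Finset.sum_bij (fun k _ => glue0 u D k)
  · intro k _
    simp only [Finset.mem_filter, Finset.mem_univ, true_and]
    ext x
    by_cases hx : x ∈ D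
    · simp [glue0, hx]
    · simp [glue0, hx, (k ⟨x, hx⟩).2]
  · intro k _ k' _ h
    ext x
    have := congrFun h x.1
    simpa [glue0, x.2] using this
  · intro h hh
    simp only [Finset.mem_filter, Finset.mem_univ, true_and] at hh
    have hm : ∀ y, y ∈ D ↔ h y = u := by
      intro y; rw [← hh]; simp
    refine ⟨fun x => ⟨h x.1, ?_⟩, Finset.mem_univ _, ?_⟩
    · exact fun hx => x.2 ((hm x.1).2 hx)
    · ext x
      by_cases hx : x ∈ D
      · have h2 := hx
        rw [← hh] at h2
        simp only [Finset.mem_filter, Finset.mem_univ, true_and] at h2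
        simp [glue0, hx, h2]
      · simp [glue0, hx]
  · intro k _; rfl

/-- average of `F (number of reachable items)` over uniformly random hash functions -/
noncomputable def Av {ι α β : Type} [Fintype ι] [DecidableEq ι] [Fintype α] [Fintype β]
    (A0 : Finset α) (A1 : Finset β) (F : ℕ → ℝ) : ℝ :=
  (∑ h0 : ι → α, ∑ h1 : ι → β, F (Ec h0 h1 A0 A1)) /
    ((Fintype.card α : ℝ) ^ Fintype.card ι * (Fintype.card β : ℝ) ^ Fintype.card ι)

lemma Av_swap {ι α β : Type} [Fintype ι] [DecidableEq ι] [Fintype α] [Fintype β]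
    (A0 : Finset α) (A1 : Finset β) (F : ℕ → ℝ) :
    Av (ι := ι) A0 A1 F = Av (ι := ι) A1 A0 F := by
  unfold Av
  rw [Finset.sum_comm, mul_comm]
  simp only [Ec_swap _ _ A0 A1]

lemma Av_const {ι α β : Type} [Fintype ι] [DecidableEq ι] [Fintype α] [Fintype β]
    (A0 : Finset α) (A1 : Finset β) (c : ℝ) (h0 : 0 < Fintype.card α) (h1 : 0 < Fintype.card β) :
    Av (ι := ι) A0 A1 (fun _ => c) = c := by
  unfold Av
  simp
  field_simp

lemma Av_mono {ι α β : Type} [Fintype ι] [DecidableEq ι] [Fintype α] [Fintype β]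
    (A0 : Finset α) (A1 : Finset β) (F G : ℕ → ℝ) (h : ∀ e, F e ≤ G e) :
    Av (ι := ι) A0 A1 F ≤ Av (ι := ι) A0 A1 G := by
  unfold Av
  gcongr
  exact h _

lemma Av_empty {ι α β : Type} [Fintype ι] [DecidableEq ι] [Fintype α] [Fintype β]
    (F : ℕ → ℝ) (h0 : 0 < Fintype.card α) (h1 : 0 < Fintype.card β) :
    Av (ι := ι) (∅ : Finset α) (∅ : Finset β) F = F 0 := by
  unfold Av
  simp only [Ec_empty]
  simp
  field_simp

lemma Av_rec {ι α β : Type} [Fintype ι] [DecidableEq ι] [Fintype α] [Fintype β]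
    [DecidableEq α] [DecidableEq β]
    (A0 : Finset α) (A1 : Finset β) (F : ℕ → ℝ) (u : α) (hu : u ∈ A0)
    (h0 : 2 ≤ Fintype.card α) (h1 : 0 < Fintype.card β) :
    Av (ι := ι) A0 A1 F = ∑ D : Finset ι,
      ((Fintype.card α : ℝ) - 1) ^ (Fintype.card ι - D.card) / (Fintype.card α : ℝ) ^ Fintype.card ι *
      ((∑ g : {x // x ∈ D} → β, Av (ι := {x // x ∉ D}) (A0.subtype (fun a => a ≠ u))
        (A1 ∪ Finset.univ.image g) (fun e => F (D.card + e))) / (Fintype.card β : ℝ) ^ D.card) := by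
  have ca : (Fintype.card {a : α // a ≠ u} : ℝ) = (Fintype.card α : ℝ) - 1 := by
    rw [Fintype.card_subtype_compl]
    simp
    rw [Nat.cast_sub (by omega)]; simp
  have cpos : (0 : ℝ) < (Fintype.card α : ℝ) - 1 := by
    have : (2 : ℝ) ≤ Fintype.card α := by exact_mod_cast h0
    linarith
  have bpos : (0 : ℝ) < (Fintype.card β : ℝ) := by exact_mod_cast h1
  have apos : (0 : ℝ) < (Fintype.card α : ℝ) := by linarith
  unfold Av
  rw [sum_glue0 u, Finset.sum_div]
  apply Finset.sum_congr rfl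
  intro D _
  have cD : Fintype.card {x // x ∉ D} = Fintype.card ι - D.card := by
    rw [Fintype.card_subtype_compl]; simp
  have hle : D.card ≤ Fintype.card ι := Finset.card_le_univ D
  rw [ca, cD, ← Finset.sum_div]
  have : ∑ k : {x // x ∉ D} → {a : α // a ≠ u}, ∑ h1, F (Ec (glue0 u D k) h1 A0 A1)
    = ∑ g : {x // x ∈ D} → β, ∑ k : {x // x ∉ D} → {a : α // a ≠ u}, ∑ k1 : {x // x ∉ D} → β,
      F (D.card + Ec k k1 (A0.subtype (fun a => a ≠ u)) (A1 ∪ Finset.univ.image g)) := by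
    rw [Finset.sum_comm]
    rw [Finset.sum_comm]
    conv_rhs => rw [Finset.sum_comm]
    apply Finset.sum_congr rfl
    intro k _
    rw [sum_glue1 D]
    simp only [Ec_glue A0 A1 u hu]
  rw [this]
  have e : (Fintype.card β : ℝ) ^ Fintype.card ι
      = (Fintype.card β : ℝ) ^ (Fintype.card ι - D.card) * (Fintype.card β : ℝ) ^ D.card := by
    rw [← pow_add]; congr 1; omega
  rw [e]
  field_simp

end Ck

namespace Ck

lemma card_sub {α : Type} [DecidableEq α] (A0 : Finset α) (u : α) (hu : u ∈ A0) :
    (A0.subtype (fun a => a ≠ u)).card + 1 = A0.card := by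
  rw [Finset.card_subtype, Finset.filter_ne' A0 u, Finset.card_erase_add_one hu]

lemma card_un {β : Type} {ι : Type} [DecidableEq β] (A1 : Finset β) (D : Finset ι)
    (g : {x // x ∈ D} → β) : (A1 ∪ Finset.univ.image g).card ≤ A1.card + D.card := by
  refine (Finset.card_union_le _ _).trans ?_
  gcongr
  refine Finset.card_image_le.trans ?_
  simp

lemma Av_le {ι α β : Type} [Fintype ι] [DecidableEq ι] [Fintype α] [Fintype β]
    [DecidableEq α] [DecidableEq β]
    (A0 : Finset α) (A1 : Finset β) (F : ℕ → ℝ) (u : α) (hu : u ∈ A0)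
    (h0 : 2 ≤ Fintype.card α) (h1 : 0 < Fintype.card β) (B : Finset ι → ℝ)
    (hB : ∀ (D : Finset ι) (g : {x // x ∈ D} → β),
      Av (ι := {x // x ∉ D}) (A0.subtype (fun a => a ≠ u))
        (A1 ∪ Finset.univ.image g) (fun e => F (D.card + e)) ≤ B D) :
    Av (ι := ι) A0 A1 F ≤ ∑ D : Finset ι,
      ((Fintype.card α : ℝ) - 1) ^ (Fintype.card ι - D.card) /
        (Fintype.card α : ℝ) ^ Fintype.card ι * B D := by
  rw [Av_rec A0 A1 F u hu h0 h1]
  have cpos : (0 : ℝ) < (Fintype.card α : ℝ) - 1 := by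
    have : (2 : ℝ) ≤ Fintype.card α := by exact_mod_cast h0
    linarith
  have bpos : (0 : ℝ) < (Fintype.card β : ℝ) := by exact_mod_cast h1
  apply Finset.sum_le_sum
  intro D _
  gcongr
  rw [div_le_iff₀ (by positivity)]
  refine (Finset.sum_le_sum (fun g _ => hB D g)).trans ?_
  simp [mul_comm]

lemma sum_D {ι : Type} [Fintype ι] [DecidableEq ι] (a w : ℝ) :
    ∑ D : Finset ι, a ^ (Fintype.card ι - D.card) * w ^ D.card = (w + a) ^ Fintype.card ι := by
  have := Finset.sum_pow_mul_eq_add_pow w a (Finset.univ : Finset ι)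
  rw [Finset.powerset_univ, Finset.card_univ] at this
  rw [← this]
  exact Finset.sum_congr rfl (fun D _ => mul_comm _ _)

lemma tail (μ y z : ℝ) (hμ0 : 0 < μ) (hy : 1 ≤ y) (hz : 1 ≤ z)
    (hμ : Real.exp ((z * y - 1) * μ) ≤ y) :
    ∀ s : ℕ, ∀ (ι α β : Type) [Fintype ι] [DecidableEq ι] [Fintype α] [Fintype β]
    [DecidableEq α] [DecidableEq β]
    (A0 : Finset α) (A1 : Finset β) (i : ℕ), A0.card + A1.card + i ≤ s →
    0 < Fintype.card α → 0 < Fintype.card β →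
    (0 < i → (Fintype.card ι : ℝ) ≤ μ * ((Fintype.card α : ℝ) - (A0.card + A1.card + i))) →
    (0 < i → (Fintype.card ι : ℝ) ≤ μ * ((Fintype.card β : ℝ) - (A0.card + A1.card + i))) →
    Av (ι := ι) A0 A1 (fun e => if i ≤ e then 1 else 0) ≤ y ^ (A0.card + A1.card) / z ^ i := by
  intro s
  induction s with
  | zero =>
    intro ι α β _ _ _ _ _ _ A0 A1 i hs h0 h1 _ _
    have hi : i = 0 := by omega
    have : A0.card + A1.card = 0 := by omega
    subst hi
    simp only [this, zero_le, if_true, pow_zero, div_one]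
    exact (Av_const A0 A1 1 h0 h1).le
  | succ s ih =>
    intro ι α β _ _ _ _ _ _ A0 A1 i hs h0 h1 hN0 hN1
    -- case i = 0
    rcases Nat.eq_zero_or_pos i with rfl | hi
    · simp only [zero_le, if_true, pow_zero, div_one]
      refine (Av_const A0 A1 1 h0 h1).le.trans ?_
      exact one_le_pow₀ hy
    -- main step
    have main : ∀ (α β : Type) [Fintype α] [Fintype β] [DecidableEq α] [DecidableEq β]
      (A0 : Finset α) (A1 : Finset β), A0.Nonempty → A0.card + A1.card + i ≤ s + 1 →
      0 < Fintype.card α → 0 < Fintype.card β →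
      ((Fintype.card ι : ℝ) ≤ μ * ((Fintype.card α : ℝ) - (A0.card + A1.card + i))) →
      ((Fintype.card ι : ℝ) ≤ μ * ((Fintype.card β : ℝ) - (A0.card + A1.card + i))) →
      Av (ι := ι) A0 A1 (fun e => if i ≤ e then 1 else 0) ≤ y ^ (A0.card + A1.card) / z ^ i := by
      intro α β _ _ _ _ A0 A1 hne hs h0 h1 hN0 hN1
      obtain ⟨u, hu⟩ := hne
      have hq : 1 ≤ A0.card := Finset.card_pos.2 ⟨u, hu⟩
      have hM : A0.card + A1.card + i ≤ Fintype.card α := by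
        have h1 : (0 : ℝ) ≤ μ * ((Fintype.card α : ℝ) - (A0.card + A1.card + i)) :=
          le_trans (by positivity) hN0
        have h2 := nonneg_of_mul_nonneg_right h1 hμ0
        have : ((A0.card + A1.card + i : ℕ) : ℝ) ≤ Fintype.card α := by push_cast; linarith
        exact_mod_cast this
      have hM2 : 2 ≤ Fintype.card α := by omega
      have hzp : 0 < z := by linarith
      have hyp : 0 < y := by linarith
      have step := Av_le (ι := ι) A0 A1 (fun e => if i ≤ e then 1 else 0) u hu hM2 h1
        (fun D => (z * y) ^ D.card * (y ^ (A0.card + A1.card - 1) / z ^ i)) ?_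
      · refine step.trans ?_
        have e1 : ∑ D : Finset ι, ((Fintype.card α : ℝ) - 1) ^ (Fintype.card ι - D.card) /
            (Fintype.card α : ℝ) ^ Fintype.card ι *
              ((z * y) ^ D.card * (y ^ (A0.card + A1.card - 1) / z ^ i)) =
            (((z * y + ((Fintype.card α : ℝ) - 1)) / (Fintype.card α : ℝ)) ^ Fintype.card ι) *
              (y ^ (A0.card + A1.card - 1) / z ^ i) := by
          rw [div_pow, ← sum_D, Finset.sum_div, Finset.sum_mul]
          apply Finset.sum_congr rfl
          intro D _
          ring
        rw [e1]
        have e2 : y ^ (A0.card + A1.card) = y * y ^ (A0.card + A1.card - 1) := by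
          rw [← pow_succ']; congr 1; omega
        rw [e2, mul_div_assoc]
        gcongr
        have hMp : (0 : ℝ) < Fintype.card α := by exact_mod_cast h0
        have hzy : 1 ≤ z * y := one_le_mul_of_one_le_of_one_le hz hy
        calc ((z * y + ((Fintype.card α : ℝ) - 1)) / (Fintype.card α : ℝ)) ^ Fintype.card ι
            ≤ (Real.exp ((z * y - 1) / Fintype.card α)) ^ Fintype.card ι := by
              have : (z * y + ((Fintype.card α : ℝ) - 1)) / (Fintype.card α : ℝ)
                  = (z * y - 1) / Fintype.card α + 1 := by field_simp; ring
              rw [this]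
              gcongr
              exact Real.add_one_le_exp _
          _ = Real.exp ((z * y - 1) * (Fintype.card ι / Fintype.card α)) := by
              rw [← Real.exp_nat_mul]; congr 1; ring
          _ ≤ Real.exp ((z * y - 1) * μ) := by
              gcongr
              · rw [div_le_iff₀ hMp]
                refine hN0.trans ?_
                have : (0 : ℝ) ≤ A0.card + A1.card + i := by positivity
                gcongr
                linarith
          _ ≤ y := hμ
      · intro D g
        have c1 := card_sub A0 u hu
        have c2 := card_un A1 D g
        have cA : Fintype.card {a : α // a ≠ u} + 1 = Fintype.card α := by
          rw [Fintype.card_subtype_compl]; simp; omega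
        have cD : Fintype.card {x // x ∉ D} = Fintype.card ι - D.card := by
          rw [Fintype.card_subtype_compl]; simp
        have hDle : D.card ≤ Fintype.card ι := Finset.card_le_univ D
        have hfun : (fun e => if i ≤ D.card + e then (1 : ℝ) else 0)
            = (fun e => if i - D.card ≤ e then (1 : ℝ) else 0) := by
          funext e
          congr 1
          simp only [eq_iff_iff]; omega
        simp only [hfun]
        have bd : y ^ ((A0.subtype (fun a => a ≠ u)).card + (A1 ∪ Finset.univ.image g).card) / z ^ (i - D.card)
            ≤ (z * y) ^ D.card * (y ^ (A0.card + A1.card - 1) / z ^ i) := by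
          have e3 : (z * y) ^ D.card * (y ^ (A0.card + A1.card - 1) / z ^ i)
              = y ^ (D.card + (A0.card + A1.card - 1)) * (z ^ D.card / z ^ i) := by
            rw [mul_pow, pow_add]; ring
          rw [e3, div_eq_mul_inv]
          apply mul_le_mul (pow_le_pow_right₀ hy (by omega)) _ (by positivity) (by positivity)
          · rw [inv_le_comm₀ (by positivity) (by positivity), inv_div, div_le_iff₀ (by positivity), ← pow_add]
            exact pow_le_pow_right₀ hz (by omega)
        refine le_trans ?_ bd
        by_cases hdi : i ≤ D.card
        · have : i - D.card = 0 := by omega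
          rw [this]
          simp only [zero_le, if_true, pow_zero, div_one]
          refine (Av_const _ _ 1 (by omega) h1).le.trans ?_
          exact one_le_pow₀ hy
        · have hcast : (((A0.subtype (fun a => a ≠ u)).card : ℝ) + (A1 ∪ Finset.univ.image g).card + ((i - D.card : ℕ) : ℝ)) + 1
              ≤ A0.card + A1.card + i := by
            have : (A0.subtype (fun a => a ≠ u)).card + (A1 ∪ Finset.univ.image g).card + (i - D.card) + 1
              ≤ A0.card + A1.card + i := by omega
            exact_mod_cast this
          have cA' : (Fintype.card {a : α // a ≠ u} : ℝ) = Fintype.card α - 1 := by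
            rw [← cA]; push_cast; ring
          have cD' : (Fintype.card {x // x ∉ D} : ℝ) ≤ Fintype.card ι := by
            rw [cD]; exact_mod_cast Nat.sub_le _ _
          apply ih
          · omega
          · omega
          · exact h1
          · intro _
            refine cD'.trans (hN0.trans ?_)
            rw [cA']
            apply mul_le_mul_of_nonneg_left _ hμ0.le
            linarith
          · intro _
            refine cD'.trans (hN1.trans ?_)
            apply mul_le_mul_of_nonneg_left _ hμ0.le
            linarith
    rcases A0.eq_empty_or_nonempty with hA | hA
    · rcases A1.eq_empty_or_nonempty with hB | hB
      · rw [hA, hB, Av_empty _ h0 h1]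
        rw [if_neg (by omega)]
        positivity
      · rw [Av_swap, add_comm A0.card]
        apply main _ _ _ _ hB (by omega) h1 h0
        · have := hN1 hi; rwa [add_comm (A1.card : ℝ)]
        · have := hN0 hi; rwa [add_comm (A1.card : ℝ)]
    · exact main _ _ _ _ hA hs h0 h1 (hN0 hi) (hN1 hi)

lemma tail1_aux (μ y z : ℝ) (hμ0 : 0 < μ) (hy : 1 ≤ y) (hz : 1 ≤ z)
    (hμ : Real.exp ((z * y - 1) * μ) ≤ y) 
    (ι α β : Type) [Fintype ι] [DecidableEq ι] [Fintype α] [Fintype β]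
    [DecidableEq α] [DecidableEq β] (u : α) (i : ℕ) (hi : 0 < i)
    (h0 : 2 ≤ Fintype.card α) (h1 : 0 < Fintype.card β)
    (hN0 : (Fintype.card ι : ℝ) ≤ μ * ((Fintype.card α : ℝ) - (1 + i)))
    (hN1 : (Fintype.card ι : ℝ) ≤ μ * ((Fintype.card β : ℝ) - (1 + i))) :
    Av (ι := ι) {u} (∅ : Finset β) (fun e => if i ≤ e then 1 else 0) ≤
      (Fintype.card ι / Fintype.card α : ℝ) * (z * y * y) / z ^ i := by
  have hzp : 0 < z := by linarith
  have hyp : 0 < y := by linarith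
  have hMp : (0 : ℝ) < Fintype.card α := by exact_mod_cast (by omega : 0 < Fintype.card α)
  have hM2 : (2 : ℝ) ≤ Fintype.card α := by exact_mod_cast h0
  have hzy : 1 ≤ z * y := one_le_mul_of_one_le_of_one_le hz hy
  have step := Av_le (ι := ι) {u} (∅ : Finset β) (fun e => if i ≤ e then 1 else 0) u (by simp) h0 h1
    (fun D => ((z * y) ^ D.card - 0 ^ D.card) * (1 / z ^ i)) ?_
  · refine step.trans ?_
    have e1 : ∑ D : Finset ι, ((Fintype.card α : ℝ) - 1) ^ (Fintype.card ι - D.card) /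
        (Fintype.card α : ℝ) ^ Fintype.card ι *
          (((z * y) ^ D.card - 0 ^ D.card) * (1 / z ^ i)) =
        ((((z * y + ((Fintype.card α : ℝ) - 1)) / (Fintype.card α : ℝ)) ^ Fintype.card ι) -
        (((0 + ((Fintype.card α : ℝ) - 1)) / (Fintype.card α : ℝ)) ^ Fintype.card ι)) *
          (1 / z ^ i) := by
      rw [div_pow, div_pow, ← sum_D, ← sum_D, Finset.sum_div, Finset.sum_div, ← Finset.sum_sub_distrib, Finset.sum_mul]
      apply Finset.sum_congr rfl
      intro D _
      ring
    rw [e1, div_eq_mul_one_div (_ * _)]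
    gcongr
    set X : ℝ := (z * y + ((Fintype.card α : ℝ) - 1)) / (Fintype.card α : ℝ) with hX
    set Y : ℝ := (0 + ((Fintype.card α : ℝ) - 1)) / (Fintype.card α : ℝ) with hY
    have hY0 : 0 ≤ Y := div_nonneg (by linarith) hMp.le
    have hXY : X - Y = z * y / Fintype.card α := by rw [hX, hY]; field_simp; ring
    have hX1 : 1 ≤ X := by rw [hX, le_div_iff₀ hMp]; linarith
    have hYX : Y ≤ X := by
      have : 0 ≤ X - Y := by rw [hXY]; positivity
      linarith
    have hpow : X ^ Fintype.card ι ≤ y := by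
      calc X ^ Fintype.card ι
            ≤ (Real.exp ((z * y - 1) / Fintype.card α)) ^ Fintype.card ι := by
              have : X = (z * y - 1) / Fintype.card α + 1 := by rw [hX]; field_simp; ring
              rw [this]
              gcongr
              exact Real.add_one_le_exp _
          _ = Real.exp ((z * y - 1) * (Fintype.card ι / Fintype.card α)) := by
              rw [← Real.exp_nat_mul]; congr 1; ring
          _ ≤ Real.exp ((z * y - 1) * μ) := by
              gcongr
              · rw [div_le_iff₀ hMp]
                refine hN0.trans ?_
                gcongr
                have : (0 : ℝ) ≤ i := by positivity
                linarith
          _ ≤ y := hμ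
    have hdiff : X ^ Fintype.card ι - Y ^ Fintype.card ι ≤ Fintype.card ι * (X - Y) * X ^ Fintype.card ι := by
      generalize Fintype.card ι = N
      induction N with
      | zero => simp
      | succ N ih =>
        have a1 : X ^ (N+1) - Y ^ (N+1) = X ^ N * (X - Y) + Y * (X ^ N - Y ^ N) := by ring
        have a2 : Y * (X ^ N - Y ^ N) ≤ X * (N * (X - Y) * X ^ N) := by
          apply mul_le_mul hYX ih _ (by linarith)
          have := pow_le_pow_left₀ hY0 hYX N
          linarith
        have a3 : X ^ N * (X - Y) ≤ X ^ (N+1) * (X - Y) := by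
          apply mul_le_mul_of_nonneg_right _ (by linarith)
          exact pow_le_pow_right₀ hX1 (by omega)
        rw [a1]
        push_cast
        calc _ ≤ X ^ (N+1) * (X - Y) + X * (N * (X - Y) * X ^ N) := add_le_add a3 a2
          _ = _ := by ring
    refine hdiff.trans ?_
    rw [hXY]
    calc _ ≤ Fintype.card ι * (z * y / Fintype.card α) * y := by gcongr
      _ = _ := by ring
  · intro D g
    have cA : Fintype.card {a : α // a ≠ u} + 1 = Fintype.card α := by
      rw [Fintype.card_subtype_compl]; simp; omega
    have cA' : (Fintype.card {a : α // a ≠ u} : ℝ) = Fintype.card α - 1 := by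
      rw [← cA]; push_cast; ring
    have hemp : (({u} : Finset α).subtype (fun a => a ≠ u)) = ∅ := by
      ext ⟨a, ha⟩; simp [ha]
    have c2 := card_un (∅ : Finset β) D g
    rw [hemp]
    rcases D.eq_empty_or_nonempty with rfl | hD
    · have : (∅ : Finset β) ∪ Finset.univ.image g = ∅ := by
        apply Finset.card_eq_zero.1
        simp
      rw [this, Av_empty _ (by omega) h1]
      have hi0 : ¬ (i ≤ 0) := by omega
      simp [hi.ne']
    · have hd : D.card ≠ 0 := by simpa [Finset.card_eq_zero] using hD.ne_empty
      have hDle : D.card ≤ Fintype.card ι := Finset.card_le_univ D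
      have cD : Fintype.card {x // x ∉ D} = Fintype.card ι - D.card := by
        rw [Fintype.card_subtype_compl]; simp
      have cD' : (Fintype.card {x // x ∉ D} : ℝ) ≤ Fintype.card ι := by
        rw [cD]; exact_mod_cast Nat.sub_le _ _
      have hfun : (fun e => if i ≤ D.card + e then (1 : ℝ) else 0)
          = (fun e => if i - D.card ≤ e then (1 : ℝ) else 0) := by
        funext e
        congr 1
        simp only [eq_iff_iff]; omega
      simp only [hfun]
      have hc : 0 < i - D.card → (((∅ : Finset {a : α // a ≠ u}).card : ℝ) + (∅ ∪ Finset.univ.image g).card + ((i - D.card : ℕ) : ℝ)) ≤ i := by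
        intro hh
        have : (∅ : Finset {a : α // a ≠ u}).card + (∅ ∪ Finset.univ.image g).card + (i - D.card) ≤ i := by
          simp only [Finset.card_empty] at c2 ⊢; omega
        exact_mod_cast this
      refine (tail μ y z hμ0 hy hz hμ _ _ _ _ _ _ (i - D.card) le_rfl (by omega) h1 ?_ ?_).trans ?_
      · intro hh
        refine cD'.trans (hN0.trans ?_)
        apply mul_le_mul_of_nonneg_left _ hμ0.le
        rw [cA']
        have := hc hh
        linarith
      · intro hh
        refine cD'.trans (hN1.trans ?_)
        apply mul_le_mul_of_nonneg_left _ hμ0.le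
        have := hc hh
        linarith
      · rw [zero_pow hd, sub_zero]
        have e3 : (z * y) ^ D.card * (1 / z ^ i) = y ^ D.card * (z ^ D.card / z ^ i) := by
          rw [mul_pow]; ring
        rw [e3, div_eq_mul_inv]
        apply mul_le_mul (pow_le_pow_right₀ hy ?_) _ (by positivity) (by positivity)
        · simp only [Finset.card_empty] at c2 ⊢; omega
        · rw [inv_le_comm₀ (by positivity) (by positivity), inv_div, div_le_iff₀ (by positivity), ← pow_add]
          exact pow_le_pow_right₀ hz (by omega)

end Ck

namespace Ck

noncomputable def phi (q j : ℕ) : ℝ :=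
  if j = 0 then 1 else (q : ℝ) * ((q : ℝ) + j) ^ (j - 1) / (j.factorial : ℝ)

noncomputable def pg (l : ℝ) (q j : ℕ) : ℝ :=
  Real.exp (-(l * (q + j))) * l ^ j * phi q j

lemma binom_sum (K : ℝ) (j : ℕ) :
    ∑ d ∈ Finset.range (j + 1), K ^ (j - d) / ((d.factorial : ℝ) * ((j - d).factorial : ℝ))
      = (1 + K) ^ j / (j.factorial : ℝ) := by
  rw [add_pow, Finset.sum_div]
  apply Finset.sum_congr rfl
  intro d hd
  have hd' : d ≤ j := by simpa [Nat.lt_succ_iff] using hd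
  rw [Nat.cast_choose ℝ hd']
  have := Nat.factorial_pos j
  field_simp
  simp

lemma phi_rec (q j : ℕ) :
    phi (q + 1) j = ∑ d ∈ Finset.range (j + 1), phi (q + d) (j - d) / (d.factorial : ℝ) := by
  rcases Nat.eq_zero_or_pos j with rfl | hj
  · simp [phi]
  obtain ⟨i, rfl⟩ : ∃ i, j = i + 1 := ⟨j - 1, by omega⟩
  set K : ℝ := (q : ℝ) + (i + 1 : ℕ) with hK
  have hKp : 0 < K := by rw [hK]; positivity
  have h1 : ∀ d ∈ Finset.range (i + 1 + 1), phi (q + d) (i + 1 - d) / (d.factorial : ℝ)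
      = (1 / K) * ((q : ℝ) * (K ^ (i + 1 - d) / ((d.factorial : ℝ) * ((i + 1 - d).factorial : ℝ)))
        + (d : ℝ) * (K ^ (i + 1 - d) / ((d.factorial : ℝ) * ((i + 1 - d).factorial : ℝ)))) := by
    intro d hd
    have hd' : d ≤ i + 1 := by simpa [Nat.lt_succ_iff] using hd
    have hc : ((i + 1 - d : ℕ) : ℝ) = (i + 1 : ℕ) - (d : ℝ) := by
      rw [Nat.cast_sub hd']
    unfold phi
    split_ifs with h
    · have : d = i + 1 := by omega
      subst this
      rw [h, hK]
      have : (0 : ℝ) < q + ((i + 1 : ℕ) : ℝ) := by positivity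
      simp only [pow_zero, Nat.factorial_zero, Nat.cast_one, mul_one]
      field_simp
    · have e : ((q + d : ℕ) : ℝ) + ((i + 1 - d : ℕ) : ℝ) = K := by
        rw [hc, hK]; push_cast; ring
      rw [e]
      have e2 : K ^ (i + 1 - d) = K * K ^ (i + 1 - d - 1) := by
        rw [← pow_succ']; congr 1; omega
      rw [e2]
      push_cast
      field_simp
  rw [Finset.sum_congr rfl h1, ← Finset.mul_sum, Finset.sum_add_distrib, ← Finset.mul_sum, binom_sum]
  have h2 : ∑ d ∈ Finset.range (i + 1 + 1), (d : ℝ) * (K ^ (i + 1 - d) / ((d.factorial : ℝ) * ((i + 1 - d).factorial : ℝ)))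
      = (1 + K) ^ i / (i.factorial : ℝ) := by
    rw [Finset.sum_range_succ', ← binom_sum]
    simp only [Nat.cast_zero, zero_mul, add_zero]
    apply Finset.sum_congr rfl
    intro d _
    have : i + 1 - (d + 1) = i - d := by omega
    rw [this, Nat.factorial_succ]
    push_cast
    field_simp
  rw [h2]
  unfold phi
  rw [if_neg (by omega)]
  have e3 : ((q + 1 : ℕ) : ℝ) + ((i + 1 : ℕ) : ℝ) = 1 + K := by rw [hK]; push_cast; ring
  rw [e3, Nat.factorial_succ]
  simp only [Nat.add_sub_cancel]
  have hq : (q : ℝ) = K - i - 1 := by rw [hK]; push_cast; ring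
  push_cast
  rw [hq, pow_succ]
  field_simp
  ring

lemma pg_rec (l : ℝ) (q j : ℕ) :
    pg l (q + 1) j = ∑ d ∈ Finset.range (j + 1),
      (Real.exp (-l) * l ^ d / (d.factorial : ℝ)) * pg l (q + d) (j - d) := by
  unfold pg
  rw [phi_rec, Finset.mul_sum]
  apply Finset.sum_congr rfl
  intro d hd
  have hd' : d ≤ j := by simpa [Nat.lt_succ_iff] using hd
  have e1 : Real.exp (-(l * (((q + 1 : ℕ) : ℝ) + j))) =
      Real.exp (-l) * Real.exp (-(l * (((q + d : ℕ) : ℝ) + ((j - d : ℕ) : ℝ)))) := by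
    rw [← Real.exp_add, Nat.cast_sub hd']; congr 1; push_cast; ring
  have e2 : l ^ j = l ^ d * l ^ (j - d) := by rw [← pow_add]; congr 1; omega
  rw [e1, e2]; ring

lemma pg_nonneg (l : ℝ) (hl : 0 ≤ l) (q j : ℕ) : 0 ≤ pg l q j := by
  unfold pg phi
  split_ifs <;> positivity

lemma pg_le_one (l : ℝ) (hl : 0 ≤ l) : ∀ s q j : ℕ, q + j ≤ s → pg l q j ≤ 1 := by
  have hz : ∀ j, pg l 0 j ≤ 1 := by
    intro j
    unfold pg phi
    split_ifs with h
    · subst h; simp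
    · simp
  intro s
  induction s with
  | zero =>
    intro q j h
    have : q = 0 := by omega
    subst this; exact hz j
  | succ s ih =>
    intro q j h
    rcases q with _ | q
    · exact hz j
    rw [pg_rec]
    calc _ ≤ ∑ d ∈ Finset.range (j + 1), (Real.exp (-l) * l ^ d / (d.factorial : ℝ)) * 1 := by
          apply Finset.sum_le_sum
          intro d hd
          have hd' : d ≤ j := by simpa [Nat.lt_succ_iff] using hd
          gcongr
          apply ih; omega
      _ = Real.exp (-l) * ∑ d ∈ Finset.range (j + 1), l ^ d / (d.factorial : ℝ) := by
          rw [Finset.mul_sum]; apply Finset.sum_congr rfl; intro d _; ring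
      _ ≤ Real.exp (-l) * Real.exp l := by
          gcongr
          exact Real.sum_le_exp_of_nonneg hl _
      _ = 1 := by rw [← Real.exp_add]; simp

lemma pg_ratio (l : ℝ) (hl : 0 ≤ l) (j : ℕ) :
    pg l 1 (j + 1) ≤ (l * Real.exp (1 - l)) * pg l 1 j := by
  have hphi : ∀ j : ℕ, phi 1 j = ((j : ℝ) + 1) ^ j / (((j + 1).factorial : ℕ) : ℝ) := by
    intro j
    unfold phi
    split_ifs with h
    · subst h; simp
    · obtain ⟨i, rfl⟩ : ∃ i, j = i + 1 := ⟨j - 1, by omega⟩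
      rw [Nat.factorial_succ (i + 1)]
      simp only [Nat.add_sub_cancel]
      push_cast
      rw [pow_succ]
      have : (0 : ℝ) < (i : ℝ) + 1 + 1 := by positivity
      have : (0 : ℝ) < (i : ℝ) + 1  := by positivity
      have e : (1 : ℝ) + (i + 1) = i + 1 + 1 := by ring
      rw [e]
      field_simp
  have h1 : phi 1 (j + 1) ≤ Real.exp 1 * phi 1 j := by
    rw [hphi, hphi, Nat.factorial_succ (j + 1)]
    push_cast
    have hj : (0 : ℝ) < (j : ℝ) + 1 := by positivity
    have h2 : ((j : ℝ) + 1 + 1) ^ j ≤ Real.exp 1 * ((j : ℝ) + 1) ^ j := by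
      have : ((j : ℝ) + 1 + 1) = (1 / ((j : ℝ) + 1) + 1) * ((j : ℝ) + 1) := by field_simp; ring
      rw [this, mul_pow]
      gcongr
      calc (1 / ((j : ℝ) + 1) + 1) ^ j ≤ (Real.exp (1 / ((j : ℝ) + 1))) ^ j := by
            gcongr; exact Real.add_one_le_exp _
        _ = Real.exp (j * (1 / ((j : ℝ) + 1))) := by rw [← Real.exp_nat_mul]
        _ ≤ Real.exp 1 := by
            gcongr
            rw [mul_one_div, div_le_one hj]; linarith
    have hf : (0 : ℝ) < ((j + 1).factorial : ℝ) := by positivity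
    rw [pow_succ]
    have hj2 : (0 : ℝ) < (j : ℝ) + 1 + 1 := by positivity
    have : ((j : ℝ) + 1 + 1) ^ j * ((j : ℝ) + 1 + 1) / (((j : ℝ) + 1 + 1) * ((j + 1).factorial : ℝ))
        = ((j : ℝ) + 1 + 1) ^ j / ((j + 1).factorial : ℝ) := by
      field_simp
    rw [this, ← mul_div_assoc]
    gcongr
  unfold pg
  have e1 : Real.exp (-(l * (((1 : ℕ) : ℝ) + ((j + 1 : ℕ) : ℝ)))) =
      Real.exp (-l) * Real.exp (-(l * (((1 : ℕ) : ℝ) + (j : ℝ)))) := by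
    rw [← Real.exp_add]; congr 1; push_cast; ring
  rw [e1, pow_succ, sub_eq_add_neg, Real.exp_add]
  calc _ ≤ Real.exp (-l) * Real.exp (-(l * (((1 : ℕ) : ℝ) + (j : ℝ)))) * (l ^ j * l) * (Real.exp 1 * phi 1 j) := by
        gcongr
    _ = _ := by ring

lemma pow_diff (x y : ℝ) (hx : 0 ≤ x) (hx1 : x ≤ 1) (hy : 0 ≤ y) (hy1 : y ≤ 1) (d : ℕ) :
    |x ^ d - y ^ d| ≤ d * |x - y| := by
  induction d with
  | zero => simp
  | succ d ih =>
    have : x ^ (d + 1) - y ^ (d + 1) = x ^ d * (x - y) + y * (x ^ d - y ^ d) := by ring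
    rw [this]
    refine (abs_add_le _ _).trans ?_
    rw [abs_mul, abs_mul, abs_of_nonneg hy, abs_of_nonneg (pow_nonneg hx d)]
    have h1 : x ^ d * |x - y| ≤ 1 * |x - y| := by
      gcongr; exact pow_le_one₀ hx hx1
    have h2 : y * |x ^ d - y ^ d| ≤ 1 * |x ^ d - y ^ d| := by gcongr
    push_cast
    linarith

lemma exp_diff (a b : ℝ) (hb : 0 ≤ b) : Real.exp (-b) - Real.exp (-a) ≤ |a - b| := by
  have h : Real.exp (-a) ≥ Real.exp (-b) * (1 - (a - b)) := by
    have : Real.exp (-a) = Real.exp (-b) * Real.exp (-(a - b)) := by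
      rw [← Real.exp_add]; congr 1; ring
    rw [this]
    gcongr
    have := Real.add_one_le_exp (-(a - b))
    linarith
  have h1 : Real.exp (-b) ≤ 1 := by rw [Real.exp_le_one_iff]; linarith
  have h2 : Real.exp (-b) * (a - b) ≤ 1 * |a - b| := by
    calc Real.exp (-b) * (a - b) ≤ Real.exp (-b) * |a - b| := by
          gcongr; exact le_abs_self _
      _ ≤ 1 * |a - b| := by gcongr
  linarith

lemma weight_diff (n m J N M d : ℕ) (hJ : 1 ≤ J) (hnm : n + J ≤ m) (hm : 2 * (J + 1) ≤ m)
    (hd : d ≤ J) (hdN : d ≤ N) (hN : N ≤ n) (hN' : n + d ≤ N + J) (hM : M ≤ m) (hM' : m + 1 ≤ M + J) :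
    |((N.choose d : ℝ) * (((M : ℝ) - 1) ^ (N - d) / (M : ℝ) ^ N))
      - Real.exp (-((n : ℝ) / m)) * ((n : ℝ) / m) ^ d / (d.factorial : ℝ)| ≤ 6 * (J : ℝ) ^ 2 / m := by
  have hJr : (1 : ℝ) ≤ J := by exact_mod_cast hJ
  have hmr : 2 * ((J : ℝ) + 1) ≤ m := by exact_mod_cast hm
  have hnmr : (n : ℝ) + J ≤ m := by exact_mod_cast hnm
  have hNr : (N : ℝ) ≤ n := by exact_mod_cast hN
  have hN'r : (n : ℝ) + d ≤ N + J := by exact_mod_cast hN'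
  have hMr : (M : ℝ) ≤ m := by exact_mod_cast hM
  have hM'r : (m : ℝ) + 1 ≤ M + J := by exact_mod_cast hM'
  have hdr : (d : ℝ) ≤ J := by exact_mod_cast hd
  have hdNr : (d : ℝ) ≤ N := by exact_mod_cast hdN
  have hd0 : (0 : ℝ) ≤ d := by positivity
  have hn0 : (0 : ℝ) ≤ n := by positivity
  have hmp : (0 : ℝ) < m := by linarith
  have hM1 : (0 : ℝ) < M - 1 := by linarith
  have hMp : (0 : ℝ) < M := by linarith
  set l : ℝ := (n : ℝ) / m with hl
  have hl0 : 0 ≤ l := by positivity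
  have hl1 : l ≤ 1 := by rw [hl, div_le_one hmp]; linarith
  -- general closeness
  have close : ∀ (x y : ℝ), (n : ℝ) - J ≤ x → x ≤ n → (m : ℝ) - J ≤ y → y ≤ m → 0 ≤ x →
      |x / y - l| ≤ 2 * J / m := by
    intro x y hx1 hx2 hy1 hy2 hx0
    have hyp : 0 < y := by linarith
    rw [abs_le]
    constructor
    · have h1 : x / m ≤ x / y := by gcongr
      have h2 : l - J / m ≤ x / m := by
        rw [hl, ← sub_div]; gcongr
      have h3 : (J : ℝ) / m ≤ 2 * J / m := by gcongr; linarith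
      have : -(2 * (J : ℝ) / m) = - (2 * J / m) := rfl
      linarith
    · have h1 : x / y ≤ n / (m - J) := by
        have : (0 : ℝ) < m - J := by linarith
        gcongr
      have h2 : (n : ℝ) / (m - J) - l ≤ 2 * J / m := by
        have hp : (0 : ℝ) < m - J := by linarith
        rw [hl, div_sub_div _ _ hp.ne' hmp.ne', div_le_div_iff₀ (by positivity) hmp]
        have : (n : ℝ) * m - (m - J) * n = n * J := by ring
        rw [this]
        have : (n : ℝ) ≤ 2 * (m - J) := by linarith
        have h3 : (n : ℝ) * (J * m) ≤ 2 * (m - J) * (J * m) := by gcongr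
        linarith
      linarith
  have hdesc : (N.choose d : ℝ) = (N.descFactorial d : ℝ) / d.factorial := by
    rw [Nat.descFactorial_eq_factorial_mul_choose]; push_cast
    field_simp
  set P : ℝ := (N.descFactorial d : ℝ) / (M : ℝ) ^ d with hP
  set R : ℝ := (((M : ℝ) - 1) / M) ^ (N - d) with hR
  have e1 : (N.choose d : ℝ) * (((M : ℝ) - 1) ^ (N - d) / (M : ℝ) ^ N) = P * R / d.factorial := by
    rw [hdesc, hP, hR, div_pow]
    have : (M : ℝ) ^ N = M ^ d * M ^ (N - d) := by rw [← pow_add]; congr 1; omega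
    rw [this]
    field_simp
  have hR0 : 0 ≤ R := by positivity
  have hR1 : R ≤ 1 := by
    apply pow_le_one₀ (by positivity)
    rw [div_le_one hMp]; linarith
  have hPl : |P - l ^ d| ≤ d * (2 * J / m) := by
    have hup : P ≤ ((N : ℝ) / M) ^ d := by
      rw [hP, div_pow]; gcongr
      exact_mod_cast Nat.descFactorial_le_pow N d
    have hlo : (((N : ℝ) - d) / M) ^ d ≤ P := by
      rw [hP, div_pow]
      gcongr
      have h1 := Nat.pow_sub_le_descFactorial N d
      have h2 : ((N - d : ℕ) : ℝ) ^ d ≤ (N.descFactorial d : ℝ) := by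
        have h3 : (N - d) ^ d ≤ N.descFactorial d :=
          le_trans (Nat.pow_le_pow_left (by omega) d) h1
        exact_mod_cast h3
      rwa [Nat.cast_sub hdN] at h2
    have c1 := close N M (by linarith) hNr (by linarith) hMr (by positivity)
    have c2 := close (N - d) M (by linarith) (by linarith) (by linarith) hMr (by linarith)
    have p1 := pow_diff ((N : ℝ) / M) l (by positivity) (by rw [div_le_one hMp]; linarith) hl0 hl1 d
    have p2 := pow_diff (((N : ℝ) - d) / M) l (div_nonneg (by linarith) hMp.le) (by rw [div_le_one hMp]; linarith) hl0 hl1 d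
    have p1' := p1.trans (mul_le_mul_of_nonneg_left c1 hd0)
    have p2' := p2.trans (mul_le_mul_of_nonneg_left c2 hd0)
    rw [abs_le] at p1' p2' ⊢
    constructor <;> linarith [p1'.1, p1'.2, p2'.1, p2'.2]
  have hRl : |R - Real.exp (-l)| ≤ 2 * J / m := by
    have hcast : ((N - d : ℕ) : ℝ) = N - d := Nat.cast_sub hdN
    have hup : R ≤ Real.exp (-(((N : ℝ) - d) / M)) := by
      have : ((M : ℝ) - 1) / M ≤ Real.exp (-(1 / M)) := by
        have h := Real.add_one_le_exp (-(1 / (M : ℝ)))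
        have : ((M : ℝ) - 1) / M = -(1 / (M : ℝ)) + 1 := by field_simp; ring
        rw [this]; exact h
      calc R ≤ (Real.exp (-(1 / M))) ^ (N - d) := by rw [hR]; gcongr
        _ = _ := by rw [← Real.exp_nat_mul, hcast]; congr 1; ring
    have hlo : Real.exp (-(((N : ℝ) - d) / (M - 1))) ≤ R := by
      have : Real.exp (-(1 / ((M : ℝ) - 1))) ≤ ((M : ℝ) - 1) / M := by
        rw [Real.exp_neg, inv_le_comm₀ (by positivity) (by positivity), inv_div]
        have h := Real.add_one_le_exp (1 / ((M : ℝ) - 1))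
        have : (M : ℝ) / (M - 1) = 1 / ((M : ℝ) - 1) + 1 := by field_simp; ring
        rw [this]; exact h
      calc _ = (Real.exp (-(1 / ((M : ℝ) - 1)))) ^ (N - d) := by
            rw [← Real.exp_nat_mul, hcast]; congr 1; ring
        _ ≤ R := by rw [hR]; gcongr
    have c1 := close (N - d) M (by linarith) (by linarith) (by linarith) hMr (by linarith)
    have c2 := close (N - d) (M - 1) (by linarith) (by linarith) (by linarith) (by linarith) (by linarith)
    have d1 := exp_diff l (((N : ℝ) - d) / M) (div_nonneg (by linarith) hMp.le)
    have d2 := exp_diff (((N : ℝ) - d) / (M - 1)) l hl0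
    rw [abs_sub_comm] at c1
    rw [abs_le]
    constructor <;> linarith
  have e2 : Real.exp (-l) * l ^ d / (d.factorial : ℝ) = l ^ d * Real.exp (-l) / d.factorial := by ring
  rw [e1, e2, ← sub_div, abs_div]
  have hf : (1 : ℝ) ≤ |(d.factorial : ℝ)| := by
    rw [abs_of_nonneg (by positivity)]
    exact_mod_cast Nat.factorial_pos d
  refine (div_le_self (abs_nonneg _) hf).trans ?_
  have e3 : P * R - l ^ d * Real.exp (-l) = (P - l ^ d) * R + l ^ d * (R - Real.exp (-l)) := by ring
  rw [e3]
  refine (abs_add_le _ _).trans ?_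
  rw [abs_mul, abs_mul, abs_of_nonneg hR0, abs_of_nonneg (pow_nonneg hl0 d)]
  have t1 : |P - l ^ d| * R ≤ d * (2 * J / m) * 1 := by gcongr
  have t2 : l ^ d * |R - Real.exp (-l)| ≤ 1 * (2 * J / m) := by
    gcongr
    exact pow_le_one₀ hl0 hl1
  have t3 : d * (2 * J / m : ℝ) ≤ J * (2 * J / m) := by gcongr
  have t4 : (J * (2 * J / m) + 2 * J / m : ℝ) ≤ 6 * (J : ℝ) ^ 2 / m := by
    have : (J * (2 * J / m) + 2 * J / m : ℝ) = (2 * J ^ 2 + 2 * J) / m := by ring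
    rw [this]
    gcongr
    nlinarith
  linarith

end Ck

namespace Ck

lemma collision {ι β : Type} [Fintype β] [DecidableEq β] [DecidableEq ι] (A1 : Finset β) (D : Finset ι)
    (hM : A1.card + D.card ≤ Fintype.card β) (hpos : 0 < Fintype.card β) :
    ∑ g : {x // x ∈ D} → β, (if (A1 ∪ Finset.univ.image g).card = A1.card + D.card then (0 : ℝ) else 1)
      ≤ ((D.card : ℝ) * (A1.card + D.card) / Fintype.card β) * (Fintype.card β : ℝ) ^ D.card := by
  set M := Fintype.card β with hMdef
  have hMp : (0 : ℝ) < M := by exact_mod_cast hpos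
  -- good functions
  have hgood : (M - A1.card).descFactorial D.card ≤
      (Finset.univ.filter (fun g : {x // x ∈ D} → β => (A1 ∪ Finset.univ.image g).card = A1.card + D.card)).card := by
    have c1 : Fintype.card ({x // x ∈ D} ↪ {b : β // b ∉ A1}) = (M - A1.card).descFactorial D.card := by
      rw [Fintype.card_embedding_eq, Fintype.card_subtype_compl]; simp [hMdef]
    rw [← c1, ← Finset.card_univ]
    apply Finset.card_le_card_of_injOn (fun f => fun x => (f x : β))
    · intro f _
      simp only [Finset.coe_filter, Finset.mem_univ, true_and, Set.mem_ofPred_eq]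
      rw [Finset.card_union_of_disjoint, Finset.card_image_of_injective]
      · simp
      · intro x y hxy
        exact f.injective (Subtype.ext hxy)
      · rw [Finset.disjoint_right]
        intro b hb
        simp only [Finset.mem_image, Finset.mem_univ, true_and] at hb
        obtain ⟨x, rfl⟩ := hb
        exact (f x).2
    · intro f _ f' _ h
      ext x
      exact congrFun h x
  have hsum : ∑ g : {x // x ∈ D} → β, (if (A1 ∪ Finset.univ.image g).card = A1.card + D.card then (0 : ℝ) else 1)
      = (M : ℝ) ^ D.card - ((Finset.univ.filter (fun g : {x // x ∈ D} → β => (A1 ∪ Finset.univ.image g).card = A1.card + D.card)).card : ℝ) := by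
    have : ∀ g : {x // x ∈ D} → β, (if (A1 ∪ Finset.univ.image g).card = A1.card + D.card then (0 : ℝ) else 1)
        = 1 - (if (A1 ∪ Finset.univ.image g).card = A1.card + D.card then (1 : ℝ) else 0) := by
      intro g; split_ifs <;> simp
    simp only [this]
    rw [Finset.sum_sub_distrib, Finset.sum_boole]
    simp [hMdef]
  rw [hsum]
  have h1 : ((M : ℝ) - A1.card - D.card) ^ D.card ≤ ((M - A1.card).descFactorial D.card : ℝ) := by
    have h2 := Nat.pow_sub_le_descFactorial (M - A1.card) D.card
    have h3 : (M - A1.card - D.card) ^ D.card ≤ (M - A1.card).descFactorial D.card :=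
      le_trans (Nat.pow_le_pow_left (by omega) _) h2
    have h4 : ((M - A1.card - D.card : ℕ) : ℝ) = (M : ℝ) - A1.card - D.card := by
      rw [Nat.cast_sub (by omega), Nat.cast_sub (by omega)]
    rw [← h4]
    exact_mod_cast h3
  have h5 : ((M - A1.card).descFactorial D.card : ℝ) ≤ ((Finset.univ.filter (fun g : {x // x ∈ D} → β => (A1 ∪ Finset.univ.image g).card = A1.card + D.card)).card : ℝ) := by
    exact_mod_cast hgood
  have hx1 : ((A1.card : ℝ) + D.card) / M ≤ 1 := by
    rw [div_le_one hMp]; exact_mod_cast hM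
  have h6 := one_add_mul_le_pow (a := -(((A1.card : ℝ) + D.card) / M)) (by linarith) D.card
  have h7 : ((M : ℝ) - A1.card - D.card) ^ D.card = (1 + -(((A1.card : ℝ) + D.card) / M)) ^ D.card * (M : ℝ) ^ D.card := by
    rw [← mul_pow]; congr 1; field_simp; ring
  have h8 := mul_le_mul_of_nonneg_right h6 (pow_nonneg hMp.le D.card)
  have h9 : (1 + (D.card : ℝ) * -(((A1.card : ℝ) + D.card) / M)) * (M : ℝ) ^ D.card
      = (M : ℝ) ^ D.card - ((D.card : ℝ) * (A1.card + D.card) / M) * (M : ℝ) ^ D.card := by ring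
  linarith

lemma approx (n m J : ℕ) (hJ : 1 ≤ J) (hJn : J ≤ n) (hnm : n + J ≤ m) (hm : 2 * (J + 1) ≤ m) :
    ∀ s : ℕ, ∀ (ι α β : Type) [Fintype ι] [DecidableEq ι] [Fintype α] [Fintype β]
    [DecidableEq α] [DecidableEq β]
    (A0 : Finset α) (A1 : Finset β) (j : ℕ), A0.card + A1.card + j ≤ s →
    Fintype.card ι ≤ n → n + j ≤ Fintype.card ι + J →
    Fintype.card α ≤ m → m + (A0.card + A1.card + j) ≤ Fintype.card α + J →
    Fintype.card β ≤ m → m + (A0.card + A1.card + j) ≤ Fintype.card β + J →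
    |Av (ι := ι) A0 A1 (fun e => if e = j then 1 else 0) - pg ((n : ℝ) / m) (A0.card + A1.card) j|
      ≤ ((A0.card : ℝ) + A1.card + j) * (8 * (J : ℝ) ^ 3 / m) := by
  have hJr : (1 : ℝ) ≤ J := by exact_mod_cast hJ
  have hmr : 2 * ((J : ℝ) + 1) ≤ m := by exact_mod_cast hm
  have hmp : (0 : ℝ) < m := by linarith
  have hl0 : (0 : ℝ) ≤ (n : ℝ) / m := by positivity
  set l : ℝ := (n : ℝ) / m with hl
  have base : ∀ (ι α β : Type) [Fintype ι] [DecidableEq ι] [Fintype α] [Fintype β]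
    [DecidableEq α] [DecidableEq β]
    (A0 : Finset α) (A1 : Finset β) (j : ℕ), A0.card + A1.card = 0 →
     0 < Fintype.card α → 0 < Fintype.card β →
    |Av (ι := ι) A0 A1 (fun e => if e = j then 1 else 0) - pg l (A0.card + A1.card) j|
      ≤ ((A0.card : ℝ) + A1.card + j) * (8 * (J : ℝ) ^ 3 / m) := by
    intro ι α β _ _ _ _ _ _ A0 A1 j h0 ha hb
    have hA0 : A0 = ∅ := Finset.card_eq_zero.1 (by omega)
    have hA1 : A1 = ∅ := Finset.card_eq_zero.1 (by omega)
    rw [h0]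
    subst hA0 hA1
    rw [Av_empty _ ha hb]
    have : (if 0 = j then (1 : ℝ) else 0) = pg l 0 j := by
      unfold pg phi
      by_cases hj : j = 0
      · subst hj; simp
      · rw [if_neg (Ne.symm hj), if_neg hj]; simp
    rw [this, sub_self, abs_zero]
    positivity
  intro s
  induction s with
  | zero =>
    intro ι α β _ _ _ _ _ _ A0 A1 j hs h1 h2 h3 h4 h5 h6
    exact base ι α β A0 A1 j (by omega) (by omega) (by omega)
  | succ s ih =>
    have main : ∀ (ι α β : Type) [Fintype ι] [DecidableEq ι] [Fintype α] [Fintype β]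
      [DecidableEq α] [DecidableEq β]
      (A0 : Finset α) (A1 : Finset β) (j : ℕ), A0.Nonempty → A0.card + A1.card + j ≤ s + 1 →
      Fintype.card ι ≤ n → n + j ≤ Fintype.card ι + J →
      Fintype.card α ≤ m → m + (A0.card + A1.card + j) ≤ Fintype.card α + J →
      Fintype.card β ≤ m → m + (A0.card + A1.card + j) ≤ Fintype.card β + J →
      |Av (ι := ι) A0 A1 (fun e => if e = j then 1 else 0) - pg l (A0.card + A1.card) j|
        ≤ ((A0.card : ℝ) + A1.card + j) * (8 * (J : ℝ) ^ 3 / m) := by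
      intro ι α β _ _ _ _ _ _ A0 A1 j hne hs h1 h2 h3 h4 h5 h6
      obtain ⟨u, hu⟩ := hne
      have hq : 1 ≤ A0.card := Finset.card_pos.2 ⟨u, hu⟩
      obtain ⟨q, hqq⟩ : ∃ q, A0.card + A1.card = q + 1 := ⟨A0.card + A1.card - 1, by omega⟩
      have hM2 : 2 ≤ Fintype.card α := by omega
      have hMb : 0 < Fintype.card β := by omega
      have hMbr : (0 : ℝ) < Fintype.card β := by exact_mod_cast hMb
      have hMar : (2 : ℝ) ≤ Fintype.card α := by exact_mod_cast hM2
      have hjN : j ≤ Fintype.card ι := by omega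
      have c1 := card_sub A0 u hu
      have cA : Fintype.card {a : α // a ≠ u} + 1 = Fintype.card α := by
        rw [Fintype.card_subtype_compl]; simp; omega
      set G : ℕ → ℝ := fun d => ((Fintype.card α : ℝ) - 1) ^ (Fintype.card ι - d) /
        (Fintype.card α : ℝ) ^ Fintype.card ι with hG
      have hG0 : ∀ d, 0 ≤ G d := by
        intro d
        apply div_nonneg
        · apply pow_nonneg; linarith
        · positivity
      have hG1 : ∑ D : Finset ι, G D.card = 1 := by
        have := sum_D (ι := ι) ((Fintype.card α : ℝ) - 1) 1
        simp only [one_pow, mul_one] at this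
        rw [hG]
        simp only
        rw [← Finset.sum_div, this, div_eq_one_iff_eq (by positivity)]
        congr 1; ring
      set E : ℝ := ((q : ℝ) + j) * (8 * (J : ℝ) ^ 3 / m) + 2 * (J : ℝ) ^ 2 / m with hE
      have hE0 : 0 ≤ E := by positivity
      -- inner comparison
      have inner : ∀ D : Finset ι, |(∑ g : {x // x ∈ D} → β, Av (ι := {x // x ∉ D}) (A0.subtype (fun a => a ≠ u))
          (A1 ∪ Finset.univ.image g) (fun e => if D.card + e = j then (1 : ℝ) else 0)) / (Fintype.card β : ℝ) ^ D.card
          - (if D.card ≤ j then pg l (q + D.card) (j - D.card) else 0)| ≤ E := by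
        intro D
        by_cases hd : D.card ≤ j
        · rw [if_pos hd]
          have hfun : (fun e => if D.card + e = j then (1 : ℝ) else 0)
              = (fun e => if e = j - D.card then (1 : ℝ) else 0) := by
            funext e; congr 1; simp only [eq_iff_iff]; omega
          rw [hfun]
          have cD : Fintype.card {x // x ∉ D} = Fintype.card ι - D.card := by
            rw [Fintype.card_subtype_compl]; simp
          have each : ∀ g : {x // x ∈ D} → β, |Av (ι := {x // x ∉ D}) (A0.subtype (fun a => a ≠ u))
              (A1 ∪ Finset.univ.image g) (fun e => if e = j - D.card then (1 : ℝ) else 0)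
                - pg l (q + D.card) (j - D.card)| ≤ ((q : ℝ) + j) * (8 * (J : ℝ) ^ 3 / m) +
              (if (A1 ∪ Finset.univ.image g).card = A1.card + D.card then (0 : ℝ) else 1) := by
            intro g
            have c2 := card_un A1 D g
            split_ifs with hc
            · have := ih {x // x ∉ D} {a : α // a ≠ u} β (A0.subtype (fun a => a ≠ u))
                (A1 ∪ Finset.univ.image g) (j - D.card) (by omega) (by omega) (by omega) (by omega) (by omega)
                h5 (by omega)
              have e : (A0.subtype (fun a => a ≠ u)).card + (A1 ∪ Finset.univ.image g).card = q + D.card := by omega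
              rw [e] at this
              rw [add_zero]
              refine this.trans ?_
              apply mul_le_mul_of_nonneg_right _ (by positivity)
              have : (A0.subtype (fun a => a ≠ u)).card + (A1 ∪ Finset.univ.image g).card + (j - D.card) ≤ q + j := by omega
              exact_mod_cast this
            · have a0 : 0 ≤ Av (ι := {x // x ∉ D}) (A0.subtype (fun a => a ≠ u))
                  (A1 ∪ Finset.univ.image g) (fun e => if e = j - D.card then (1 : ℝ) else 0) := by
                have := Av_mono (ι := {x // x ∉ D}) (A0.subtype (fun a => a ≠ u))
                  (A1 ∪ Finset.univ.image g) (fun _ => 0) (fun e => if e = j - D.card then (1 : ℝ) else 0)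
                  (by intro e; split_ifs <;> norm_num)
                rwa [Av_const _ _ _ (by omega) hMb] at this
              have a1 : Av (ι := {x // x ∉ D}) (A0.subtype (fun a => a ≠ u))
                  (A1 ∪ Finset.univ.image g) (fun e => if e = j - D.card then (1 : ℝ) else 0) ≤ 1 := by
                have := Av_mono (ι := {x // x ∉ D}) (A0.subtype (fun a => a ≠ u))
                  (A1 ∪ Finset.univ.image g) (fun e => if e = j - D.card then (1 : ℝ) else 0) (fun _ => 1)
                  (by intro e; split_ifs <;> norm_num)
                rwa [Av_const _ _ _ (by omega) hMb] at this
              have b0 := pg_nonneg l hl0 (q + D.card) (j - D.card)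
              have b1 := pg_le_one l hl0 _ (q + D.card) (j - D.card) le_rfl
              have : (0 : ℝ) ≤ ((q : ℝ) + j) * (8 * (J : ℝ) ^ 3 / m) := by positivity
              rw [abs_le]; constructor <;> linarith
          have hcardg : ∑ g : {x // x ∈ D} → β, (1 : ℝ) = (Fintype.card β : ℝ) ^ D.card := by simp
          have hsub : (∑ g : {x // x ∈ D} → β, Av (ι := {x // x ∉ D}) (A0.subtype (fun a => a ≠ u))
              (A1 ∪ Finset.univ.image g) (fun e => if e = j - D.card then (1 : ℝ) else 0)) / (Fintype.card β : ℝ) ^ D.card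
              - pg l (q + D.card) (j - D.card) = (∑ g : {x // x ∈ D} → β, (Av (ι := {x // x ∉ D}) (A0.subtype (fun a => a ≠ u))
              (A1 ∪ Finset.univ.image g) (fun e => if e = j - D.card then (1 : ℝ) else 0)
                - pg l (q + D.card) (j - D.card))) / (Fintype.card β : ℝ) ^ D.card := by
            rw [Finset.sum_sub_distrib, sub_div]
            congr 1
            rw [eq_div_iff (by positivity)]
            simp [mul_comm]
          rw [hsub, abs_div, abs_of_pos (by positivity : (0 : ℝ) < (Fintype.card β : ℝ) ^ D.card), div_le_iff₀ (by positivity)]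
          refine (Finset.abs_sum_le_sum_abs _ _).trans ?_
          refine (Finset.sum_le_sum (fun g _ => each g)).trans ?_
          rw [Finset.sum_add_distrib]
          have hcol := collision A1 D (by omega) hMb
          have hk : (D.card : ℝ) * (A1.card + D.card) / Fintype.card β ≤ 2 * (J : ℝ) ^ 2 / m := by
            have k1 : (D.card : ℝ) ≤ J := by exact_mod_cast (by omega : D.card ≤ J)
            have k2 : (A1.card + D.card : ℝ) ≤ J := by exact_mod_cast (by omega : A1.card + D.card ≤ J)
            have k3 : (m : ℝ) ≤ 2 * Fintype.card β := by exact_mod_cast (by omega : m ≤ 2 * Fintype.card β)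
            rw [div_le_div_iff₀ hMbr hmp]
            calc (D.card : ℝ) * (A1.card + D.card) * m ≤ J * J * (2 * Fintype.card β) := by gcongr
              _ = _ := by ring
          have hcol' := hcol.trans (mul_le_mul_of_nonneg_right hk (by positivity))
          have e : ∑ g : {x // x ∈ D} → β, ((q : ℝ) + j) * (8 * (J : ℝ) ^ 3 / m)
              = ((q : ℝ) + j) * (8 * (J : ℝ) ^ 3 / m) * (Fintype.card β : ℝ) ^ D.card := by
            simp [mul_comm]
          rw [e, hE, add_mul]
          linarith
        · rw [if_neg hd]
          have hfun : (fun e => if D.card + e = j then (1 : ℝ) else 0) = (fun _ => 0) := by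
            funext e; rw [if_neg]; omega
          rw [hfun]
          simp only [Av_const _ _ _ (by omega : 0 < Fintype.card {a : α // a ≠ u}) hMb]
          simpa using hE0
      rw [Av_rec A0 A1 _ u hu hM2 hMb]
      have hI : ∑ D : Finset ι, G D.card * (if D.card ≤ j then pg l (q + D.card) (j - D.card) else 0)
          = ∑ d ∈ Finset.range (j + 1), ((Fintype.card ι).choose d : ℝ) * G d * pg l (q + d) (j - d) := by
        have := Finset.sum_powerset_apply_card (x := (Finset.univ : Finset ι)) (fun d => G d * (if d ≤ j then pg l (q + d) (j - d) else 0))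
        rw [Finset.powerset_univ, Finset.card_univ] at this
        rw [this]
        symm
        apply Finset.sum_subset_zero_on_sdiff
        · intro d hd; simp only [Finset.mem_range] at hd ⊢; omega
        · intro d hd
          simp only [Finset.mem_sdiff, Finset.mem_range] at hd
          rw [if_neg (by omega)]; simp
        · intro d hd
          simp only [Finset.mem_range] at hd
          rw [if_pos (by omega)]; simp [mul_assoc]
      rw [hqq, pg_rec]
      set T1 := ∑ D : Finset ι, G D.card * (if D.card ≤ j then pg l (q + D.card) (j - D.card) else 0) with hT1
      have s1 : |(∑ D : Finset ι, ((Fintype.card α : ℝ) - 1) ^ (Fintype.card ι - D.card) / (Fintype.card α : ℝ) ^ Fintype.card ι *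
          ((∑ g : {x // x ∈ D} → β, Av (ι := {x // x ∉ D}) (A0.subtype (fun a => a ≠ u))
          (A1 ∪ Finset.univ.image g) (fun e => if D.card + e = j then (1 : ℝ) else 0)) / (Fintype.card β : ℝ) ^ D.card)) - T1| ≤ E := by
        rw [hT1, ← Finset.sum_sub_distrib]
        refine (Finset.abs_sum_le_sum_abs _ _).trans ?_
        calc _ ≤ ∑ D : Finset ι, G D.card * E := by
              apply Finset.sum_le_sum
              intro D _
              rw [← mul_sub, abs_mul, abs_of_nonneg (hG0 D.card)]
              exact mul_le_mul_of_nonneg_left (inner D) (hG0 _)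
          _ = E := by rw [← Finset.sum_mul, hG1, one_mul]
      have s2 : |T1 - ∑ d ∈ Finset.range (j + 1), Real.exp (-l) * l ^ d / (d.factorial : ℝ) * pg l (q + d) (j - d)|
          ≤ J * (6 * (J : ℝ) ^ 2 / m) := by
        rw [hI, ← Finset.sum_sub_distrib]
        refine (Finset.abs_sum_le_sum_abs _ _).trans ?_
        calc _ ≤ ∑ d ∈ Finset.range (j + 1), 6 * (J : ℝ) ^ 2 / m := by
              apply Finset.sum_le_sum
              intro d hd
              simp only [Finset.mem_range] at hd
              rw [← sub_mul, abs_mul, abs_of_nonneg (pg_nonneg l hl0 _ _)]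
              have w := weight_diff n m J (Fintype.card ι) (Fintype.card α) d hJ hnm hm (by omega) (by omega) h1 (by omega) h3 (by omega)
              have b1 := pg_le_one l hl0 _ (q + d) (j - d) le_rfl
              have b0 := pg_nonneg l hl0 (q + d) (j - d)
              calc _ ≤ (6 * (J : ℝ) ^ 2 / m) * 1 := by
                    apply mul_le_mul _ b1 b0 (by positivity)
                    exact w
                _ = _ := mul_one _
          _ = ((j + 1 : ℕ) : ℝ) * (6 * (J : ℝ) ^ 2 / m) := by simp
          _ ≤ _ := by
              gcongr
              omega
      have hfin : E + J * (6 * (J : ℝ) ^ 2 / m) ≤ ((A0.card : ℝ) + A1.card + j) * (8 * (J : ℝ) ^ 3 / m) := by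
        have e : (A0.card : ℝ) + A1.card = q + 1 := by exact_mod_cast hqq
        rw [e, hE]
        have : 2 * (J : ℝ) ^ 2 / m ≤ 2 * (J : ℝ) ^ 3 / m := by
          gcongr 2 * ?_ / m
          exact pow_le_pow_right₀ hJr (by norm_num)
        have e2 : ((q : ℝ) + 1 + j) * (8 * (J : ℝ) ^ 3 / m) = ((q : ℝ) + j) * (8 * (J : ℝ) ^ 3 / m) + 2 * (J : ℝ) ^ 3 / m + J * (6 * (J : ℝ) ^ 2 / m) := by ring
        rw [e2]
        linarith
      refine le_trans ?_ hfin
      refine (abs_sub_le _ T1 _).trans (add_le_add s1 s2)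
    intro ι α β _ _ _ _ _ _ A0 A1 j hs h1 h2 h3 h4 h5 h6
    rcases A0.eq_empty_or_nonempty with hA | hA
    · rcases A1.eq_empty_or_nonempty with hB | hB
      · exact base ι α β A0 A1 j (by simp [hA, hB]) (by omega) (by omega)
      · rw [Av_swap, add_comm A0.card, add_comm (A0.card : ℝ)]
        apply main ι _ _ _ _ _ hB <;> omega
    · exact main ι _ _ _ _ _ hA hs h1 h2 h3 h4 h5 h6

end Ck

namespace Ck

lemma conn_closed {n m : ℕ} {h0 h1 : Fin n → Fin m} (S0 S1 : Set (Fin m))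
    (hS : ∀ y, h0 y ∈ S0 ↔ h1 y ∈ S1) {u v : Fin m ⊕ Fin m} (h : cuckooConn n m h0 h1 u v) :
    (Sum.elim (· ∈ S0) (· ∈ S1) u : Prop) ↔ Sum.elim (· ∈ S0) (· ∈ S1) v := by
  induction h with
  | rel a b hab =>
    obtain ⟨x, rfl, rfl⟩ := hab
    exact hS x
  | refl a => exact Iff.rfl
  | symm a b _ ih => exact ih.symm
  | trans a b c _ _ ih1 ih2 => exact ih1.trans ih2

lemma conn_edge {n m : ℕ} (h0 h1 : Fin n → Fin m) (x : Fin n) :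
    cuckooConn n m h0 h1 (Sum.inl (h0 x)) (Sum.inr (h1 x)) :=
  Relation.EqvGen.rel _ _ ⟨x, rfl, rfl⟩

lemma conn_refl {n m : ℕ} (h0 h1 : Fin n → Fin m) (v) : cuckooConn n m h0 h1 v v :=
  Relation.EqvGen.refl _

lemma conn_symm {n m : ℕ} {h0 h1 : Fin n → Fin m} {u v} (h : cuckooConn n m h0 h1 u v) :
    cuckooConn n m h0 h1 v u := Relation.EqvGen.symm _ _ h

lemma conn_trans {n m : ℕ} {h0 h1 : Fin n → Fin m} {u v w} (h : cuckooConn n m h0 h1 u v)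
    (h' : cuckooConn n m h0 h1 v w) :
    cuckooConn n m h0 h1 u w := Relation.EqvGen.trans _ _ _ h h'

lemma cls {n m : ℕ} (h0 h1 : Fin n → Fin m) (v) (y : Fin n) :
    cuckooConn n m h0 h1 (Sum.inl (h0 y)) v ↔ cuckooConn n m h0 h1 (Sum.inr (h1 y)) v :=
  ⟨fun h => conn_trans (conn_symm (conn_edge h0 h1 y)) h, fun h => conn_trans (conn_edge h0 h1 y) h⟩

lemma C_eq {n m : ℕ} (h0 h1 : Fin n → Fin m) (v) :
    cuckooC n m h0 h1 v = (Finset.univ.filter (fun x => cuckooConn n m h0 h1 (Sum.inl (h0 x)) v)).card := by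
  unfold cuckooC
  rw [Nat.card_eq_fintype_card, Fintype.card_subtype]

lemma C_inl {n m : ℕ} (h0 h1 : Fin n → Fin m) (a : Fin m) :
    cuckooC n m h0 h1 (Sum.inl a) = Ec h0 h1 {a} ∅ := by
  rw [C_eq]
  unfold Ec
  congr 1
  ext x
  simp only [Finset.mem_filter, Finset.mem_univ, true_and]
  constructor
  · intro h S0 S1 hS a0 a1
    have := conn_closed S0 S1 hS h
    simp only [Sum.elim_inl] at this
    exact this.2 (a0 (by simp))
  · intro h
    exact h {a' | cuckooConn n m h0 h1 (Sum.inl a') (Sum.inl a)}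
      {b' | cuckooConn n m h0 h1 (Sum.inr b') (Sum.inl a)} (fun y => cls h0 h1 _ y)
      (by simpa using conn_refl h0 h1 _) (by simp)

lemma C_inr {n m : ℕ} (h0 h1 : Fin n → Fin m) (a : Fin m) :
    cuckooC n m h0 h1 (Sum.inr a) = Ec h0 h1 ∅ {a} := by
  rw [C_eq]
  unfold Ec
  congr 1
  ext x
  simp only [Finset.mem_filter, Finset.mem_univ, true_and]
  constructor
  · intro h S0 S1 hS a0 a1
    have := conn_closed S0 S1 hS h
    simp only [Sum.elim_inl, Sum.elim_inr] at this
    exact this.2 (a1 (by simp))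
  · intro h
    exact h {a' | cuckooConn n m h0 h1 (Sum.inl a') (Sum.inr a)}
      {b' | cuckooConn n m h0 h1 (Sum.inr b') (Sum.inr a)} (fun y => cls h0 h1 _ y)
      (by simp) (by simpa using conn_refl h0 h1 _)

lemma E_C {n m : ℕ} (v : Fin m ⊕ Fin m) (F : ℕ → ℝ) :
    ∃ A0 A1 : Finset (Fin m), ((∃ u, A0 = {u} ∧ A1 = ∅) ∨ (∃ u, A0 = ∅ ∧ A1 = {u})) ∧
    cuckooE n m (fun ω => F (cuckooC n m ω.1 ω.2 v)) = Av (ι := Fin n) A0 A1 F := by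
  rcases v with a | b
  · refine ⟨{a}, ∅, Or.inl ⟨a, rfl, rfl⟩, ?_⟩
    unfold cuckooE Av
    simp only [C_inl]
    rw [Fintype.sum_prod_type]
    simp
  · refine ⟨∅, {b}, Or.inr ⟨b, rfl, rfl⟩, ?_⟩
    unfold cuckooE Av
    simp only [C_inr]
    rw [Fintype.sum_prod_type]
    simp

lemma E_eq_bound {n m J j : ℕ} (hjJ : j + 1 ≤ J) (hJn : J ≤ n) (hnm : n + J ≤ m) (hm : 2 * (J + 1) ≤ m)
    (v : Fin m ⊕ Fin m) :
    |cuckooE n m (fun ω => if cuckooC n m ω.1 ω.2 v = j then 1 else 0) - pg ((n : ℝ) / m) 1 j|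
      ≤ (1 + j) * (8 * (J : ℝ) ^ 3 / m) := by
  obtain ⟨A0, A1, hA, h⟩ := E_C (n := n) v (fun e => if e = j then 1 else 0)
  have hc : A0.card + A1.card = 1 := by
    rcases hA with ⟨u, rfl, rfl⟩ | ⟨u, rfl, rfl⟩ <;> simp
  have := approx n m J (by omega) hJn hnm hm (1 + j) (Fin n) (Fin m) (Fin m) A0 A1 j (by omega)
    (by simp) (by simp; omega) (by simp) (by simp; omega) (by simp) (by simp; omega)
  rw [hc] at this
  rw [h]
  refine this.trans (le_of_eq ?_)
  have : (A0.card : ℝ) + A1.card = 1 := by exact_mod_cast hc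
  rw [this]

lemma E_ge_bound {n m i : ℕ} (μ y z : ℝ) (hμ0 : 0 < μ) (hy : 1 ≤ y) (hz : 1 ≤ z)
    (hμ : Real.exp ((z * y - 1) * μ) ≤ y) (hi : 0 < i) (hm : 2 ≤ m)
    (hN : (n : ℝ) ≤ μ * (m - (1 + i))) (v : Fin m ⊕ Fin m) :
    cuckooE n m (fun ω => if i ≤ cuckooC n m ω.1 ω.2 v then 1 else 0) ≤
      (n / m : ℝ) * (z * y * y) / z ^ i := by
  obtain ⟨A0, A1, hA, h⟩ := E_C (n := n) v (fun e => if i ≤ e then 1 else 0)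
  rw [h]
  rcases hA with ⟨u, rfl, rfl⟩ | ⟨u, rfl, rfl⟩
  · have := tail1_aux μ y z hμ0 hy hz hμ (Fin n) (Fin m) (Fin m) u i hi (by simpa using hm) (by simp; omega)
      (by simpa using hN) (by simpa using hN)
    simpa using this
  · rw [Av_swap]
    have := tail1_aux μ y z hμ0 hy hz hμ (Fin n) (Fin m) (Fin m) u i hi (by simpa using hm) (by simp; omega)
      (by simpa using hN) (by simpa using hN)
    simpa using this

lemma cE_sum {n m : ℕ} {κ : Type} (s : Finset κ) (f : κ → HashPair n m → ℝ) :
    cuckooE n m (fun ω => ∑ k ∈ s, f k ω) = ∑ k ∈ s, cuckooE n m (f k) := by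
  unfold cuckooE
  rw [Finset.sum_comm, Finset.sum_div]

lemma cE_mono {n m : ℕ} (f g : HashPair n m → ℝ) (h : ∀ ω, f ω ≤ g ω) :
    cuckooE n m f ≤ cuckooE n m g := by
  unfold cuckooE
  gcongr
  exact h _

lemma Pr_eq {n m : ℕ} (P : HashPair n m → Prop) :
    cuckooPr n m P = cuckooE n m (fun ω => if P ω then 1 else 0) := by
  unfold cuckooPr cuckooE
  rw [Nat.card_eq_fintype_card (α := {ω // P ω}), Fintype.card_subtype]
  congr 1
  rw [Finset.sum_boole]

lemma X_eq {n m : ℕ} (h0 h1 : Fin n → Fin m) (j : ℕ) :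
    (cuckooX n m h0 h1 j : ℝ) = ∑ v : Fin m ⊕ Fin m, if cuckooC n m h0 h1 v = j then (1 : ℝ) else 0 := by
  unfold cuckooX
  rw [Nat.card_eq_fintype_card, Fintype.card_subtype, Finset.sum_boole]

lemma EX_bound {n m J j : ℕ} (hjJ : j + 1 ≤ J) (hJn : J ≤ n) (hnm : n + J ≤ m) (hm : 2 * (J + 1) ≤ m) :
    |cuckooE n m (fun ω => (cuckooX n m ω.1 ω.2 j : ℝ)) - 2 * m * pg ((n : ℝ) / m) 1 j|
      ≤ 16 * (J : ℝ) ^ 4 := by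
  simp only [X_eq]
  rw [cE_sum]
  have hmp : (0 : ℝ) < m := by exact_mod_cast (by omega : 0 < m)
  have e1 : 2 * (m : ℝ) * pg ((n : ℝ) / m) 1 j = ∑ v : Fin m ⊕ Fin m, pg ((n : ℝ) / m) 1 j := by
    rw [Finset.sum_const, Finset.card_univ, Fintype.card_sum, Fintype.card_fin, nsmul_eq_mul]
    push_cast; ring
  rw [e1, ← Finset.sum_sub_distrib]
  refine (Finset.abs_sum_le_sum_abs _ _).trans ?_
  refine (Finset.sum_le_sum (fun v _ => E_eq_bound hjJ hJn hnm hm v)).trans ?_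
  simp only [Finset.sum_const, Finset.card_univ, Fintype.card_sum, Fintype.card_fin, nsmul_eq_mul]
  have : ((1 : ℝ) + j) ≤ J := by exact_mod_cast (by omega : 1 + j ≤ J)
  push_cast
  have e2 : ((m : ℝ) + m) * ((1 + j) * (8 * (J : ℝ) ^ 3 / m)) = 16 * (1 + j) * (J : ℝ) ^ 3 := by
    field_simp; ring
  rw [e2]
  calc 16 * (1 + (j : ℝ)) * (J : ℝ) ^ 3 ≤ 16 * J * (J : ℝ) ^ 3 := by gcongr
    _ = _ := by ring

lemma Pr_big {n m i : ℕ} (μ y z : ℝ) (hμ0 : 0 < μ) (hy : 1 ≤ y) (hz : 1 ≤ z)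
    (hμ : Real.exp ((z * y - 1) * μ) ≤ y) (hi : 0 < i) (hm : 2 ≤ m)
    (hN : (n : ℝ) ≤ μ * (m - (1 + i))) :
    cuckooPr n m (fun ω => ∃ v, i ≤ cuckooC n m ω.1 ω.2 v) ≤ 2 * n * (z * y * y) / z ^ i := by
  rw [Pr_eq]
  have hmp : (0 : ℝ) < m := by exact_mod_cast (by omega : 0 < m)
  calc _ ≤ cuckooE n m (fun ω => ∑ v, if i ≤ cuckooC n m ω.1 ω.2 v then (1 : ℝ) else 0) := by
        apply cE_mono
        intro ω
        split_ifs with h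
        · obtain ⟨v, hv⟩ := h
          have := Finset.single_le_sum (f := fun v => if i ≤ cuckooC n m ω.1 ω.2 v then (1 : ℝ) else 0)
            (fun v _ => by split_ifs <;> norm_num) (Finset.mem_univ v)
          simpa [hv] using this
        · apply Finset.sum_nonneg
          intro v _
          split_ifs <;> norm_num
    _ ≤ _ := by
        rw [cE_sum]
        refine (Finset.sum_le_sum (fun v _ => E_ge_bound μ y z hμ0 hy hz hμ hi hm hN v)).trans ?_
        simp only [Finset.sum_const, Finset.card_univ, Fintype.card_sum, Fintype.card_fin, nsmul_eq_mul]
        apply le_of_eq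
        push_cast
        field_simp
        ring

end Ck

namespace Ck

lemma conn_change {n m : ℕ} (h0 h1 g0 g1 : Fin n → Fin m) (x : Fin n)
    (e0 : ∀ y, y ≠ x → h0 y = g0 y) (e1 : ∀ y, y ≠ x → h1 y = g1 y) (v : Fin m ⊕ Fin m)
    (n1 : ¬ cuckooConn n m h0 h1 (Sum.inl (h0 x)) v)
    (n2 : ¬ cuckooConn n m h0 h1 (Sum.inl (g0 x)) v)
    (n3 : ¬ cuckooConn n m h0 h1 (Sum.inr (g1 x)) v) :
    cuckooC n m h0 h1 v = cuckooC n m g0 g1 v := by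
  have d1 : ∀ u, cuckooConn n m g0 g1 u v → cuckooConn n m h0 h1 u v := by
    intro u hu
    have := conn_closed (h0 := g0) (h1 := g1) {a | cuckooConn n m h0 h1 (Sum.inl a) v}
      {a | cuckooConn n m h0 h1 (Sum.inr a) v} (by
        intro y
        by_cases hy : y = x
        · subst hy
          exact ⟨fun h => absurd h n2, fun h => absurd h n3⟩
        · rw [← e0 y hy, ← e1 y hy]
          exact cls h0 h1 v y) hu
    have hv : (Sum.elim (· ∈ {a | cuckooConn n m h0 h1 (Sum.inl a) v})
      (· ∈ {a | cuckooConn n m h0 h1 (Sum.inr a) v}) v : Prop) := by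
      rcases v with a | b <;> exact conn_refl _ _ _
    have h2 := this.2 hv
    rcases u with a | b <;> exact h2
  have d2 : ∀ u, cuckooConn n m h0 h1 u v → cuckooConn n m g0 g1 u v := by
    intro u hu
    have := conn_closed (h0 := h0) (h1 := h1) {a | cuckooConn n m g0 g1 (Sum.inl a) v}
      {a | cuckooConn n m g0 g1 (Sum.inr a) v} (by
        intro y
        by_cases hy : y = x
        · subst hy
          exact ⟨fun h => absurd (d1 _ h) n1, fun h => absurd ((cls h0 h1 v y).2 (d1 _ h)) n1⟩
        · rw [e0 y hy, e1 y hy]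
          exact cls g0 g1 v y) hu
    have hv : (Sum.elim (· ∈ {a | cuckooConn n m g0 g1 (Sum.inl a) v})
      (· ∈ {a | cuckooConn n m g0 g1 (Sum.inr a) v}) v : Prop) := by
      rcases v with a | b <;> exact conn_refl _ _ _
    have h2 := this.2 hv
    rcases u with a | b <;> exact h2
  rw [C_eq, C_eq]
  congr 1
  ext y
  simp only [Finset.mem_filter, Finset.mem_univ, true_and]
  by_cases hy : y = x
  · subst hy
    exact ⟨fun h => absurd h n1, fun h => absurd (d1 _ h) n2⟩
  · rw [e0 y hy]
    exact ⟨d2 _, d1 _⟩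

lemma conn_C {n m : ℕ} (h0 h1 : Fin n → Fin m) {u v} (h : cuckooConn n m h0 h1 u v) :
    cuckooC n m h0 h1 u = cuckooC n m h0 h1 v := by
  rw [C_eq, C_eq]
  congr 1
  ext y
  simp only [Finset.mem_filter, Finset.mem_univ, true_and]
  exact ⟨fun k => conn_trans k h, fun k => conn_trans k (conn_symm h)⟩

lemma comp_card {n m : ℕ} (h0 h1 : Fin n → Fin m) (w : Fin m ⊕ Fin m) (i J : ℕ) (hi : 1 ≤ i) :
    (Finset.univ.filter (fun v => cuckooConn n m h0 h1 w v ∧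
      i ≤ cuckooC n m h0 h1 v ∧ cuckooC n m h0 h1 v < J)).card ≤ 2 * J := by
  set s := Finset.univ.filter (fun v => cuckooConn n m h0 h1 w v ∧
      i ≤ cuckooC n m h0 h1 v ∧ cuckooC n m h0 h1 v < J) with hs
  by_cases hne : s.Nonempty
  · obtain ⟨v0, hv0⟩ := hne
    simp only [hs, Finset.mem_filter, Finset.mem_univ, true_and] at hv0
    obtain ⟨c0, k1, k2⟩ := hv0
    rw [C_eq] at k1 k2
    set I := Finset.univ.filter (fun x => cuckooConn n m h0 h1 (Sum.inl (h0 x)) v0) with hI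
    obtain ⟨x0, hx0⟩ := Finset.card_pos.1 (by omega : 0 < I.card)
    simp only [hI, Finset.mem_filter, Finset.mem_univ, true_and] at hx0
    have hsub : s ⊆ I.image (fun x => Sum.inl (h0 x)) ∪ I.image (fun x => Sum.inr (h1 x)) := by
      intro v hv
      simp only [hs, Finset.mem_filter, Finset.mem_univ, true_and] at hv
      have cv : cuckooConn n m h0 h1 v v0 := conn_trans (conn_symm hv.1) c0
      have := (conn_closed (Set.range h0) (Set.range h1) (by intro y; simp)
        (conn_trans hx0 (conn_symm cv))).1 ⟨x0, rfl⟩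
      simp only [Finset.mem_union, Finset.mem_image, hI, Finset.mem_filter, Finset.mem_univ, true_and]
      rcases v with a | b
      · obtain ⟨y, hy⟩ := this
        left
        exact ⟨y, by rw [hy]; exact cv, by rw [hy]⟩
      · obtain ⟨y, hy⟩ := this
        right
        exact ⟨y, by rw [cls, hy]; exact cv, by rw [hy]⟩
    have a1 := Finset.card_le_card hsub
    have a2 := Finset.card_union_le (I.image (fun x => (Sum.inl (h0 x) : Fin m ⊕ Fin m)))
      (I.image (fun x => Sum.inr (h1 x)))
    have a3 := Finset.card_image_le (s := I) (f := fun x => (Sum.inl (h0 x) : Fin m ⊕ Fin m))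
    have a4 := Finset.card_image_le (s := I) (f := fun x => (Sum.inr (h1 x) : Fin m ⊕ Fin m))
    omega
  · rw [Finset.not_nonempty_iff_eq_empty] at hne
    rw [hne]; simp

/-- Number of vertices with component size in `[i, J)`. -/
noncomputable def Yc (n m i J : ℕ) (h0 h1 : Fin n → Fin m) : ℕ :=
  (Finset.univ.filter (fun v => i ≤ cuckooC n m h0 h1 v ∧ cuckooC n m h0 h1 v < J)).card

lemma Y_lip {n m : ℕ} (h0 h1 g0 g1 : Fin n → Fin m) (x : Fin n)
    (e0 : ∀ y, y ≠ x → h0 y = g0 y) (e1 : ∀ y, y ≠ x → h1 y = g1 y) (i J : ℕ) (hi : 1 ≤ i) :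
    Yc n m i J h0 h1 ≤ Yc n m i J g0 g1 + 6 * J := by
  unfold Yc
  have c1 := comp_card h0 h1 (Sum.inl (h0 x)) i J hi
  have c2 := comp_card h0 h1 (Sum.inl (g0 x)) i J hi
  have c3 := comp_card h0 h1 (Sum.inr (g1 x)) i J hi
  set s1 := Finset.univ.filter (fun v => cuckooConn n m h0 h1 (Sum.inl (h0 x)) v ∧
      i ≤ cuckooC n m h0 h1 v ∧ cuckooC n m h0 h1 v < J) with hs1
  set s2 := Finset.univ.filter (fun v => cuckooConn n m h0 h1 (Sum.inl (g0 x)) v ∧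
      i ≤ cuckooC n m h0 h1 v ∧ cuckooC n m h0 h1 v < J) with hs2
  set s3 := Finset.univ.filter (fun v => cuckooConn n m h0 h1 (Sum.inr (g1 x)) v ∧
      i ≤ cuckooC n m h0 h1 v ∧ cuckooC n m h0 h1 v < J) with hs3
  set t := Finset.univ.filter (fun v => i ≤ cuckooC n m g0 g1 v ∧ cuckooC n m g0 g1 v < J) with ht
  have hsub : Finset.univ.filter (fun v => i ≤ cuckooC n m h0 h1 v ∧ cuckooC n m h0 h1 v < J) ⊆
      t ∪ (s1 ∪ (s2 ∪ s3)) := by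
    intro v hv
    simp only [Finset.mem_filter, Finset.mem_univ, true_and] at hv
    simp only [Finset.mem_union, hs1, hs2, hs3, ht, Finset.mem_filter, Finset.mem_univ, true_and]
    by_cases n1 : cuckooConn n m h0 h1 (Sum.inl (h0 x)) v
    · exact Or.inr (Or.inl ⟨n1, hv⟩)
    by_cases n2 : cuckooConn n m h0 h1 (Sum.inl (g0 x)) v
    · exact Or.inr (Or.inr (Or.inl ⟨n2, hv⟩))
    by_cases n3 : cuckooConn n m h0 h1 (Sum.inr (g1 x)) v
    · exact Or.inr (Or.inr (Or.inr ⟨n3, hv⟩))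
    rw [conn_change h0 h1 g0 g1 x e0 e1 v n1 n2 n3] at hv
    exact Or.inl hv
  have a1 := Finset.card_le_card hsub
  have a2 := Finset.card_union_le t (s1 ∪ (s2 ∪ s3))
  have a3 := Finset.card_union_le s1 (s2 ∪ s3)
  have a4 := Finset.card_union_le s2 s3
  omega

lemma Y_eq {n m : ℕ} (h0 h1 : Fin n → Fin m) (i J : ℕ) :
    (Yc n m i J h0 h1 : ℝ) = ∑ j ∈ Finset.Ico i J, (cuckooX n m h0 h1 j : ℝ) := by
  simp only [X_eq]
  rw [Finset.sum_comm]
  unfold Yc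
  rw [← Finset.sum_boole]
  apply Finset.sum_congr rfl
  intro v _
  rw [Finset.sum_ite_eq]
  simp

end Ck

namespace Ck

lemma hoeff {Ω : Type} [Fintype Ω] [Nonempty Ω] (f : Ω → ℝ) (s K : ℝ) (hK : 0 < K)
    (hf : ∀ a b, |f a - f b| ≤ K) :
    ∑ a, Real.exp (s * f a) ≤ Fintype.card Ω *
      Real.exp (s * ((∑ a, f a) / Fintype.card Ω) + s ^ 2 * K ^ 2 / 2) := by
  set N : ℝ := (Fintype.card Ω : ℝ) with hN
  have hNp : 0 < N := by rw [hN]; exact_mod_cast Fintype.card_pos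
  set M := (∑ a, f a) / N with hM
  have hdev : ∀ a, |(f a - M) / K| ≤ 1 := by
    intro a
    rw [abs_div, abs_of_pos hK, div_le_one hK]
    have e : f a - M = (∑ b, (f a - f b)) / N := by
      rw [hM, Finset.sum_sub_distrib, eq_div_iff hNp.ne']
      simp [← hN]
      field_simp
    rw [e, abs_div, abs_of_pos hNp, div_le_iff₀ hNp]
    refine (Finset.abs_sum_le_sum_abs _ _).trans ((Finset.sum_le_sum (fun b _ => hf a b)).trans ?_)
    simp [← hN, mul_comm]
  have step : ∀ a, Real.exp (s * f a) ≤ Real.exp (s * M) *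
      (Real.cosh (s * K) + (f a - M) / K * Real.sinh (s * K)) := by
    intro a
    have := Real.exp_mul_le_cosh_add_mul_sinh (hdev a) (s * K)
    have e : s * f a = s * M + (f a - M) / K * (s * K) := by field_simp; ring
    rw [e, Real.exp_add]
    gcongr
  refine (Finset.sum_le_sum (fun a _ => step a)).trans ?_
  rw [← Finset.mul_sum, Finset.sum_add_distrib, ← Finset.sum_mul, ← Finset.sum_div, Finset.sum_sub_distrib]
  have z : ∑ a, f a - ∑ a : Ω, M = 0 := by
    simp [← hN, hM]
    field_simp
    ring
  rw [z]
  simp only [Finset.sum_const, Finset.card_univ, nsmul_eq_mul, ← hN, zero_div, zero_mul, add_zero]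
  rw [Real.exp_add]
  have := Real.cosh_le_exp_half_sq (s * K)
  rw [mul_pow] at this
  calc _ = N * (Real.exp (s * M) * Real.cosh (s * K)) := by ring
    _ ≤ _ := by gcongr

lemma sum_cons {Ω : Type} [Fintype Ω] {n : ℕ} (f : (Fin (n + 1) → Ω) → ℝ) :
    ∑ ω, f ω = ∑ a : Ω, ∑ τ : Fin n → Ω, f (Fin.cons a τ) := by
  rw [← Fintype.sum_prod_type']
  symm
  apply Fintype.sum_equiv (Fin.consEquiv (fun _ => Ω))
  intro p
  rfl

lemma mcd {Ω : Type} [Fintype Ω] [Nonempty Ω] (s K : ℝ) (hK : 0 < K) : ∀ (n : ℕ) (f : (Fin n → Ω) → ℝ),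
    (∀ x ω ω', (∀ y, y ≠ x → ω y = ω' y) → |f ω - f ω'| ≤ K) →
    ∑ ω, Real.exp (s * f ω) ≤ (Fintype.card Ω : ℝ) ^ n *
      Real.exp (s * ((∑ ω, f ω) / (Fintype.card Ω : ℝ) ^ n) + n * (s ^ 2 * K ^ 2 / 2)) := by
  intro n
  induction n with
  | zero => intro f _; simp
  | succ n ih =>
    intro f hf
    set N : ℝ := (Fintype.card Ω : ℝ) with hN
    have hNp : 0 < N := by rw [hN]; exact_mod_cast Fintype.card_pos
    set M : Ω → ℝ := fun a => (∑ τ : Fin n → Ω, f (Fin.cons a τ)) / N ^ n with hM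
    have h1 : ∀ a, ∑ τ : Fin n → Ω, Real.exp (s * f (Fin.cons a τ)) ≤
        N ^ n * Real.exp (s * M a + n * (s ^ 2 * K ^ 2 / 2)) := by
      intro a
      apply ih (fun τ => f (Fin.cons a τ))
      intro x ω ω' h
      apply hf x.succ
      intro y
      refine Fin.cases ?_ (fun y => ?_) y
      · intro _; rfl
      · intro hy
        simp only [Fin.cons_succ]
        apply h
        rintro rfl
        exact hy rfl
    have h2 : ∀ a b, |M a - M b| ≤ K := by
      intro a b
      simp only [hM]
      rw [← sub_div, ← Finset.sum_sub_distrib, abs_div, abs_of_pos (pow_pos hNp n), div_le_iff₀ (pow_pos hNp n)]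
      refine (Finset.abs_sum_le_sum_abs _ _).trans ((Finset.sum_le_sum (g := fun _ => K) (fun τ _ => ?_)).trans ?_)
      · apply hf 0
        intro y
        refine Fin.cases ?_ (fun y => ?_) y
        · intro h; exact absurd rfl h
        · intro _; rfl
      · simp [← hN, mul_comm]
    rw [sum_cons]
    refine (Finset.sum_le_sum (fun a _ => h1 a)).trans ?_
    simp only [Real.exp_add]
    rw [← Finset.mul_sum, ← Finset.sum_mul]
    have h3 := hoeff M s K hK h2
    rw [← hN] at h3
    have h4 : (∑ a, M a) / N = (∑ ω, f ω) / N ^ (n + 1) := by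
      rw [sum_cons]
      simp only [hM]
      rw [← Finset.sum_div, div_div, pow_succ]
    rw [h4, Real.exp_add] at h3
    calc N ^ n * ((∑ a, Real.exp (s * M a)) * Real.exp (n * (s ^ 2 * K ^ 2 / 2)))
        ≤ N ^ n * ((N * (Real.exp (s * ((∑ ω, f ω) / N ^ (n + 1))) * Real.exp (s ^ 2 * K ^ 2 / 2))) *
          Real.exp (n * (s ^ 2 * K ^ 2 / 2))) := by gcongr
      _ = _ := by
        push_cast
        rw [add_mul, Real.exp_add, one_mul]
        ring

lemma mcd_tail {Ω : Type} [Fintype Ω] [Nonempty Ω] (K t : ℝ) (hK : 0 < K) (ht : 0 ≤ t) (n : ℕ) (hn : 0 < n)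
    (f : (Fin n → Ω) → ℝ)
    (hf : ∀ x ω ω', (∀ y, y ≠ x → ω y = ω' y) → |f ω - f ω'| ≤ K) :
    ∑ ω, (if (∑ ω, f ω) / (Fintype.card Ω : ℝ) ^ n + t ≤ f ω then (1 : ℝ) else 0)
     ≤ (Fintype.card Ω : ℝ) ^ n * Real.exp (-(t ^ 2 / (2 * n * K ^ 2))) := by
  have hnp : (0 : ℝ) < n := by exact_mod_cast hn
  set s := t / (n * K ^ 2) with hs
  have hs0 : 0 ≤ s := by positivity
  have h := mcd s K hK n f hf
  set M := (∑ ω, f ω) / (Fintype.card Ω : ℝ) ^ n with hM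
  have h1 : ∑ ω, (if M + t ≤ f ω then (1 : ℝ) else 0) ≤ ∑ ω, Real.exp (s * f ω) * Real.exp (-(s * (M + t))) := by
    apply Finset.sum_le_sum
    intro ω _
    split_ifs with hh
    · rw [← Real.exp_add]
      apply Real.one_le_exp
      nlinarith
    · positivity
  refine h1.trans ?_
  rw [← Finset.sum_mul]
  refine (mul_le_mul_of_nonneg_right h (Real.exp_nonneg _)).trans (le_of_eq ?_)
  rw [mul_assoc, ← Real.exp_add]
  congr 2
  rw [hs]
  field_simp
  ring

lemma mcd_cuckoo {n m : ℕ} (hn : 0 < n) (hm : 0 < m) (K t : ℝ) (hK : 0 < K) (ht : 0 ≤ t)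
    (f : HashPair n m → ℝ)
    (hf : ∀ (x : Fin n) (ω ω' : HashPair n m), (∀ y, y ≠ x → ω.1 y = ω'.1 y) → (∀ y, y ≠ x → ω.2 y = ω'.2 y) →
      f ω ≤ f ω' + K) :
    cuckooE n m (fun ω => if cuckooE n m f + t ≤ f ω then 1 else 0) ≤ Real.exp (-(t ^ 2 / (2 * n * K ^ 2))) := by
  have : Nonempty (Fin m) := ⟨⟨0, hm⟩⟩
  let e := Equiv.arrowProdEquivProdArrow (Fin n) (fun _ => Fin m) (fun _ => Fin m)
  have hsum : ∀ F : HashPair n m → ℝ, ∑ ω, F ω = ∑ ω : Fin n → Fin m × Fin m, F (e ω) := by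
    intro F
    exact (Fintype.sum_equiv e _ _ (fun _ => rfl)).symm
  have hcard : (Nat.card (HashPair n m) : ℝ) = (Fintype.card (Fin m × Fin m) : ℝ) ^ n := by
    simp [mul_pow]
  have h := mcd_tail (Ω := Fin m × Fin m) K t hK ht n hn (fun ω => f (e ω)) (by
    intro x ω ω' h
    rw [abs_le]
    have a := hf x (e ω) (e ω') (fun y hy => by simp [e, Equiv.arrowProdEquivProdArrow, h y hy]) (fun y hy => by simp [e, Equiv.arrowProdEquivProdArrow, h y hy])
    have b := hf x (e ω') (e ω) (fun y hy => by simp [e, Equiv.arrowProdEquivProdArrow, h y hy]) (fun y hy => by simp [e, Equiv.arrowProdEquivProdArrow, h y hy])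
    constructor <;> linarith)
  unfold cuckooE
  rw [hcard, hsum f, hsum, div_le_iff₀ (by positivity), mul_comm]
  exact h

end Ck

namespace Ck

lemma rho_mono (l l0 : ℝ) (hl : 0 ≤ l) (h : l ≤ l0) (h0 : 0 < l0) (h1 : l0 < 1) :
    l * Real.exp (1 - l) ≤ l0 * Real.exp (1 - l0) := by
  have e : Real.exp (1 - l0) = Real.exp (1 - l) * Real.exp (l - l0) := by
    rw [← Real.exp_add]; congr 1; ring
  rw [e]
  have k := Real.add_one_le_exp (l - l0)
  have p := Real.exp_pos (1 - l)
  have : l ≤ l0 * Real.exp (l - l0) := by nlinarith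
  nlinarith

lemma rho_lt (l0 : ℝ) (h1 : l0 < 1) : l0 * Real.exp (1 - l0) < 1 := by
  have k := Real.add_one_lt_exp (x := l0 - 1) (by linarith)
  have p := Real.exp_pos (1 - l0)
  have e : Real.exp (l0 - 1) * Real.exp (1 - l0) = 1 := by
    rw [← Real.exp_add]; simp
  nlinarith

lemma pg_geom (l ρ : ℝ) (hl : 0 ≤ l) (hρ : l * Real.exp (1 - l) ≤ ρ) (hρ0 : 0 ≤ ρ) (i k : ℕ) :
    pg l 1 (i + k) ≤ ρ ^ k * pg l 1 i := by
  induction k with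
  | zero => simp
  | succ k ih =>
    have := pg_ratio l hl (i + k)
    have n1 := pg_nonneg l hl 1 (i + k)
    calc pg l 1 (i + (k + 1)) ≤ (l * Real.exp (1 - l)) * pg l 1 (i + k) := this
      _ ≤ ρ * (ρ ^ k * pg l 1 i) := by gcongr
      _ = _ := by ring

lemma pg_sum (l ρ : ℝ) (hl : 0 ≤ l) (hρ : l * Real.exp (1 - l) ≤ ρ) (hρ0 : 0 ≤ ρ) (hρ1 : ρ < 1) (i J : ℕ) :
    ∑ j ∈ Finset.Ico i J, pg l 1 j ≤ pg l 1 i * (1 - ρ)⁻¹ := by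
  rw [Finset.sum_Ico_eq_sum_range]
  have n1 := pg_nonneg l hl 1 i
  calc _ ≤ ∑ k ∈ Finset.range (J - i), ρ ^ k * pg l 1 i :=
        Finset.sum_le_sum (fun k _ => pg_geom l ρ hl hρ hρ0 i k)
    _ = pg l 1 i * ∑ k ∈ Finset.range (J - i), ρ ^ k := by rw [← Finset.sum_mul, mul_comm]
    _ ≤ _ := by
      gcongr
      rw [← tsum_geometric_of_lt_one hρ0 hρ1]
      exact (summable_geometric_of_lt_one hρ0 hρ1).sum_le_tsum _ (fun k _ => by positivity)

lemma EY_bound {n m J i : ℕ} (hJn : J ≤ n) (hnm : n + J ≤ m) (hm : 2 * (J + 1) ≤ m)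
    (ρ T : ℝ) (hρ : (n / m : ℝ) * Real.exp (1 - (n / m : ℝ)) ≤ ρ) (hρ0 : 0 ≤ ρ) (hρ1 : ρ < 1)
    (hT : (J : ℝ) ^ 5 ≤ T)
    (hi : cuckooE n m (fun ω => (cuckooX n m ω.1 ω.2 i : ℝ)) ≤ T) :
    cuckooE n m (fun ω => (Yc n m i J ω.1 ω.2 : ℝ)) ≤ (17 * (1 - ρ)⁻¹ + 16) * T := by
  simp only [Y_eq]
  rw [cE_sum]
  have hT0 : 0 ≤ T := le_trans (by positivity) hT
  have hinv : 0 < (1 - ρ)⁻¹ := inv_pos.2 (by linarith)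
  by_cases hiJ : i < J
  · have hJ1 : (1 : ℝ) ≤ J := by exact_mod_cast (by omega : 1 ≤ J)
    have b : ∀ j ∈ Finset.Ico i J, cuckooE n m (fun ω => (cuckooX n m ω.1 ω.2 j : ℝ)) ≤
        2 * m * pg ((n : ℝ) / m) 1 j + 16 * (J : ℝ) ^ 4 := by
      intro j hj
      rw [Finset.mem_Ico] at hj
      have := (abs_le.1 (EX_bound (j := j) (by omega) hJn hnm hm)).2
      linarith
    have bi := (abs_le.1 (EX_bound (j := i) (by omega) hJn hnm hm)).1
    refine (Finset.sum_le_sum b).trans ?_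
    rw [Finset.sum_add_distrib, ← Finset.mul_sum]
    have g := pg_sum ((n : ℝ) / m) ρ (by positivity) hρ hρ0 hρ1 i J
    have c : ∑ j ∈ Finset.Ico i J, 16 * (J : ℝ) ^ 4 ≤ 16 * T := by
      simp only [Finset.sum_const, Nat.card_Ico, nsmul_eq_mul]
      have : ((J - i : ℕ) : ℝ) ≤ J := by exact_mod_cast (by omega : J - i ≤ J)
      calc _ ≤ (J : ℝ) * (16 * (J : ℝ) ^ 4) := by gcongr
        _ = 16 * (J : ℝ) ^ 5 := by ring
        _ ≤ _ := by linarith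
    have d : (J : ℝ) ^ 4 ≤ T := le_trans (pow_le_pow_right₀ hJ1 (by norm_num)) hT
    have e : 2 * (m : ℝ) * pg ((n : ℝ) / m) 1 i ≤ 17 * T := by linarith
    have f : 2 * (m : ℝ) * ∑ j ∈ Finset.Ico i J, pg ((n : ℝ) / m) 1 j ≤ 17 * T * (1 - ρ)⁻¹ := by
      calc _ ≤ 2 * (m : ℝ) * (pg ((n : ℝ) / m) 1 i * (1 - ρ)⁻¹) := by gcongr
        _ = 2 * (m : ℝ) * pg ((n : ℝ) / m) 1 i * (1 - ρ)⁻¹ := by ring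
        _ ≤ _ := by gcongr
    linarith
  · rw [Finset.Ico_eq_empty hiJ]
    simp
    positivity

lemma core {n m J i : ℕ} (hi1 : 1 ≤ i) (hJ1 : 1 ≤ J) (hJn : J ≤ n) (hnm : n + J ≤ m) (hm : 2 * (J + 1) ≤ m)
    (ρ T : ℝ) (hρ : (n / m : ℝ) * Real.exp (1 - (n / m : ℝ)) ≤ ρ) (hρ0 : 0 ≤ ρ) (hρ1 : ρ < 1)
    (hT : (J : ℝ) ^ 5 ≤ T)
    (μ y z : ℝ) (hμ0 : 0 < μ) (hy : 1 ≤ y) (hz : 1 ≤ z)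
    (hμ : Real.exp ((z * y - 1) * μ) ≤ y)
    (hN : (n : ℝ) ≤ μ * (m - (1 + J)))
    (hi : cuckooE n m (fun ω => (cuckooX n m ω.1 ω.2 i : ℝ)) ≤ T) :
    cuckooPr n m (fun ω => (17 * (1 - ρ)⁻¹ + 17) * T ≤
      (Nat.card {v : Fin m ⊕ Fin m // i ≤ cuckooC n m ω.1 ω.2 v} : ℝ)) ≤
    Real.exp (-(T ^ 2 / (2 * n * (6 * J : ℝ) ^ 2))) + 2 * n * (z * y * y) / z ^ J := by
  have hT0 : 0 ≤ T := le_trans (by positivity) hT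
  have EY := EY_bound hJn hnm hm ρ T hρ hρ0 hρ1 hT hi
  have P1 := mcd_cuckoo (n := n) (m := m) (by omega) (by omega) (6 * J) T
    (by have : (1 : ℝ) ≤ J := by exact_mod_cast hJ1
        linarith) hT0
    (fun ω => (Yc n m i J ω.1 ω.2 : ℝ)) (by
      intro x ω ω' e0 e1
      exact_mod_cast Y_lip ω.1 ω.2 ω'.1 ω'.2 x e0 e1 i J hi1)
  have P2 := Pr_big (n := n) (m := m) μ y z hμ0 hy hz hμ hJ1 (by omega) hN
  rw [Pr_eq] at P2 ⊢
  refine le_trans ?_ (add_le_add P1 P2)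
  have : ∀ f g : HashPair n m → ℝ, cuckooE n m f + cuckooE n m g = cuckooE n m (fun ω => f ω + g ω) := by
    intro f g
    unfold cuckooE
    rw [Finset.sum_add_distrib, add_div]
  rw [this]
  apply cE_mono
  intro ω
  by_cases h2 : ∃ v, J ≤ cuckooC n m ω.1 ω.2 v
  · rw [if_pos h2]
    split_ifs <;> norm_num
  · rw [if_neg h2]
    push Not at h2
    have e : Nat.card {v : Fin m ⊕ Fin m // i ≤ cuckooC n m ω.1 ω.2 v} = Yc n m i J ω.1 ω.2 := by
      rw [Nat.card_eq_fintype_card, Fintype.card_subtype]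
      unfold Yc
      congr 1
      ext v
      simp [h2 v]
    rw [e]
    split_ifs with a b b
    · norm_num
    · exfalso
      apply b
      linarith
    · norm_num
    · norm_num

lemma params (ε : ℝ) (hε : 0 < ε) : ∃ μ y z : ℝ, 0 < μ ∧ 1 ≤ y ∧ 1 < z ∧
    Real.exp ((z * y - 1) * μ) ≤ y ∧ μ * (1 + ε / 2) = 1 := by
  have hy : 0 < 1 + ε / 4 := by linarith
  have hy2 : 0 < 1 + ε / 2 := by linarith
  refine ⟨(1 + ε / 2)⁻¹, 1 + ε / 4, (1 + ε / 4 * (1 + ε / 2) / (1 + ε / 4)) / (1 + ε / 4), by positivity,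
    by linarith, ?_, ?_, ?_⟩
  · rw [lt_div_iff₀ hy, one_mul]
    have : ε / 4 < ε / 4 * (1 + ε / 2) / (1 + ε / 4) := by
      rw [lt_div_iff₀ hy]; nlinarith
    linarith
  · have e : ((1 + ε / 4 * (1 + ε / 2) / (1 + ε / 4)) / (1 + ε / 4) * (1 + ε / 4) - 1) * (1 + ε / 2)⁻¹ =
        1 - (1 + ε / 4)⁻¹ := by
      field_simp; ring
    rw [e]
    have := Real.one_sub_inv_le_log_of_pos hy
    calc _ ≤ Real.exp (Real.log (1 + ε / 4)) := by gcongr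
      _ = _ := Real.exp_log hy
  · field_simp

lemma log_ev (c C : ℝ) (hc : 0 < c) :
    ∀ᶠ x : ℝ in Filter.atTop, Real.log x ^ 2 + Real.log x + C ≤ c * x ^ ((1 : ℝ) / 10) := by
  have h1 := isLittleO_log_rpow_atTop (r := 1 / 20) (by norm_num)
  have h2 := h1.bound (c := Real.sqrt (c / 3)) (by positivity)
  have h3 : ∀ᶠ x : ℝ in Filter.atTop, max 1 C ≤ Real.log x :=
    Real.tendsto_log_atTop.eventually_ge_atTop _
  filter_upwards [h2, h3, Filter.eventually_gt_atTop 0] with x a b hx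
  have b1 : 1 ≤ Real.log x := le_trans (le_max_left _ _) b
  have b2 : C ≤ Real.log x := le_trans (le_max_right _ _) b
  rw [Real.norm_of_nonneg (by linarith), Real.norm_of_nonneg (by positivity)] at a
  have s : Real.log x ^ 2 ≤ (Real.sqrt (c / 3) * x ^ ((1 : ℝ) / 20)) ^ 2 := by gcongr
  have e : (x ^ ((1 : ℝ) / 20)) ^ 2 = x ^ ((1 : ℝ) / 10) := by
    rw [← Real.rpow_natCast, ← Real.rpow_mul hx.le]; norm_num
  rw [mul_pow, Real.sq_sqrt (by positivity), e] at s
  nlinarith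

end Ck

/-- Let `i*` be the smallest `i ≥ 1` with `E[X_i] < n^{2/3}`, and let `X_*` be the number
of vertices in components with at least `i*` edges. If `(1+ε)·n ≤ m` then
`Pr(X_* ≥ γ·n^{2/3}) ≤ n^{−c·log n}`, where `γ, c > 0` and the threshold `n₀` depend
only on `ε`. -/
theorem cuckoo_Xstar_bound (ε : ℝ) (hε : 0 < ε) :
    ∃ γ c : ℝ, 0 < γ ∧ 0 < c ∧ ∃ n₀ : ℕ, ∀ n m : ℕ, n₀ ≤ n → (1 + ε) * n ≤ m →
      ∀ istar : ℕ, 1 ≤ istar →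
        cuckooE n m (fun ω => (cuckooX n m ω.1 ω.2 istar : ℝ)) < (n : ℝ) ^ ((2 : ℝ) / 3) →
        (∀ j : ℕ, 1 ≤ j → j < istar →
          (n : ℝ) ^ ((2 : ℝ) / 3) ≤ cuckooE n m (fun ω => (cuckooX n m ω.1 ω.2 j : ℝ))) →
        cuckooPr n m (fun ω =>
            γ * (n : ℝ) ^ ((2 : ℝ) / 3) ≤
              (Nat.card {v : Fin m ⊕ Fin m // istar ≤ cuckooC n m ω.1 ω.2 v} : ℝ))
          ≤ (n : ℝ) ^ (-(c * Real.log n)) := by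
  obtain ⟨μ, y, z, hμ0, hy, hz, hμ, hμε⟩ := Ck.params ε hε
  have hε1 : 0 < 1 + ε := by linarith
  set l0 : ℝ := (1 + ε)⁻¹ with hl0
  have hl0p : 0 < l0 := by positivity
  have hl01 : l0 < 1 := inv_lt_one_of_one_lt₀ (by linarith)
  set ρ := l0 * Real.exp (1 - l0) with hρ
  have hρ1 : ρ < 1 := Ck.rho_lt l0 hl01
  have hρ0 : 0 ≤ ρ := by positivity
  have hinv : 0 < (1 - ρ)⁻¹ := inv_pos.2 (by linarith)
  refine ⟨17 * (1 - ρ)⁻¹ + 17, 1, by positivity, one_pos, ?_⟩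
  have hzl : 0 < Real.log z := Real.log_pos hz
  have hzp : 0 < z := by linarith
  have hyp : 0 < y := by linarith
  set c0 := min 1 ε with hc0
  have hc0p : 0 < c0 := lt_min one_pos hε
  have ev1 := Ck.log_ev (1 / 72) (Real.log 2) (by norm_num)
  have ev2 := Ck.log_ev (Real.log z) (Real.log 2 + Real.log (2 * (z * y * y)) + Real.log z) hzl
  have ev3 : ∀ᶠ x : ℝ in Filter.atTop, max 1 (8 / c0) ≤ x ^ ((1 : ℝ) / 10) :=
    (tendsto_rpow_atTop (by norm_num)).eventually_ge_atTop _
  have ev := (tendsto_natCast_atTop_atTop (R := ℝ)).eventually (ev1.and (ev2.and ev3))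
  obtain ⟨n₀, hn₀⟩ := Filter.eventually_atTop.1 ev
  refine ⟨n₀ + 1, ?_⟩
  intro n m hn hnm i hi1 hi _
  obtain ⟨k1, k2, k3⟩ := hn₀ n (by omega)
  have hnp : (0 : ℝ) < n := by exact_mod_cast (by omega : 0 < n)
  set r : ℝ := (n : ℝ) ^ ((1 : ℝ) / 10) with hr
  have hr1 : 1 ≤ r := le_trans (le_max_left _ _) k3
  have hr2 : 8 / c0 ≤ r := le_trans (le_max_right _ _) k3
  have hr10 : r ^ 10 = n := by
    rw [hr, ← Real.rpow_natCast, ← Real.rpow_mul hnp.le]; norm_num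
  set J := ⌊r⌋₊ with hJ
  have hJr : (J : ℝ) ≤ r := Nat.floor_le (by linarith)
  have hJr' : r - 1 ≤ J := by
    have := Nat.lt_floor_add_one r
    rw [← hJ] at this; linarith
  have hJ1 : 1 ≤ J := by rw [hJ]; exact Nat.le_floor (by simpa using hr1)
  have hJ1r : (1 : ℝ) ≤ J := by exact_mod_cast hJ1
  have hbig : 4 * ((J : ℝ) + 1) ≤ c0 * n := by
    have a : 8 ≤ c0 * r := by rw [div_le_iff₀ hc0p] at hr2; linarith
    have b : r ^ 2 ≤ n := by rw [← hr10]; exact pow_le_pow_right₀ hr1 (by norm_num)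
    calc 4 * ((J : ℝ) + 1) ≤ 8 * r := by linarith
      _ ≤ c0 * r * r := by gcongr
      _ = c0 * r ^ 2 := by ring
      _ ≤ _ := by gcongr
  have hb1 : 4 * ((J : ℝ) + 1) ≤ n := by
    have : c0 * n ≤ 1 * n := by gcongr; exact min_le_left _ _
    linarith
  have hb2 : 4 * ((J : ℝ) + 1) ≤ ε * n := by
    have : c0 * n ≤ ε * n := by gcongr; exact min_le_right _ _
    linarith
  have hJn : J ≤ n := by
    have : (J : ℝ) ≤ n := by linarith
    exact_mod_cast this
  have hnJm : n + J ≤ m := by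
    have : (n : ℝ) + J ≤ m := by linarith
    exact_mod_cast this
  have hm2 : 2 * (J + 1) ≤ m := by
    have : 2 * ((J : ℝ) + 1) ≤ m := by linarith
    exact_mod_cast this
  have hmp : (0 : ℝ) < m := by exact_mod_cast (by omega : 0 < m)
  have hlam : (n : ℝ) / m ≤ l0 := by
    rw [hl0, div_le_iff₀ hmp, ← div_eq_inv_mul, le_div_iff₀ hε1]; linarith
  have hT : (J : ℝ) ^ 5 ≤ (n : ℝ) ^ ((2 : ℝ) / 3) := by
    have a : (J : ℝ) ^ 5 ≤ r ^ 5 := by gcongr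
    have b : r ^ 5 = (n : ℝ) ^ ((1 : ℝ) / 2) := by
      rw [hr, ← Real.rpow_natCast, ← Real.rpow_mul hnp.le]; norm_num
    rw [b] at a
    refine a.trans (Real.rpow_le_rpow_of_exponent_le ?_ (by norm_num))
    linarith
  have hN : (n : ℝ) ≤ μ * (m - (1 + J)) := by
    have : (1 + ε / 2) * n ≤ (m : ℝ) - (1 + J) := by linarith
    calc (n : ℝ) = μ * ((1 + ε / 2) * n) := by rw [← mul_assoc, hμε, one_mul]
      _ ≤ _ := by gcongr
  have main := Ck.core hi1 hJ1 hJn hnJm hm2 ρ _ (Ck.rho_mono _ l0 (by positivity) hlam hl0p hl01)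
    hρ0 hρ1 hT μ y z hμ0 hy hz.le hμ hN hi.le
  refine main.trans ?_
  have hrhs : (n : ℝ) ^ (-(1 * Real.log n)) = Real.exp (-(Real.log n ^ 2)) := by
    rw [Real.rpow_def_of_pos hnp]; congr 1; ring
  rw [hrhs]
  have hn1 : (1 : ℝ) ≤ n := by linarith
  have hlogn : 0 ≤ Real.log n := Real.log_nonneg hn1
  have half : ∀ A : ℝ, Real.log n ^ 2 + Real.log 2 ≤ A → Real.exp (-A) ≤ Real.exp (-(Real.log n ^ 2)) / 2 := by
    intro A hA
    have : Real.exp (-(Real.log n ^ 2)) / 2 = Real.exp (-(Real.log n ^ 2 + Real.log 2)) := by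
      rw [neg_add, Real.exp_add, Real.exp_neg (Real.log 2), Real.exp_log (by norm_num)]; ring
    rw [this]
    gcongr
  have t1 : Real.exp (-(((n : ℝ) ^ ((2 : ℝ) / 3)) ^ 2 / (2 * n * (6 * J : ℝ) ^ 2))) ≤
      Real.exp (-(Real.log n ^ 2)) / 2 := by
    apply half
    have a : 1 / 72 * r ≤ ((n : ℝ) ^ ((2 : ℝ) / 3)) ^ 2 / (2 * n * (6 * J : ℝ) ^ 2) := by
      rw [le_div_iff₀ (by positivity)]
      have : ((n : ℝ) ^ ((2 : ℝ) / 3)) ^ 2 = (n : ℝ) ^ ((4 : ℝ) / 3) := by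
        rw [← Real.rpow_natCast, ← Real.rpow_mul hnp.le]; norm_num
      rw [this]
      have e3 : r ^ 3 * n = (n : ℝ) ^ ((13 : ℝ) / 10) := by
        have : (n : ℝ) ^ ((13 : ℝ) / 10) = (n : ℝ) ^ ((3 : ℝ) / 10) * n := by
          rw [← Real.rpow_add_one hnp.ne']; norm_num
        rw [this, hr, ← Real.rpow_natCast, ← Real.rpow_mul hnp.le]; norm_num
      calc 1 / 72 * r * (2 * n * (6 * J : ℝ) ^ 2) = r * (J : ℝ) ^ 2 * n := by ring
        _ ≤ r * r ^ 2 * n := by gcongr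
        _ = r ^ 3 * n := by ring
        _ = (n : ℝ) ^ ((13 : ℝ) / 10) := e3
        _ ≤ _ := Real.rpow_le_rpow_of_exponent_le hn1 (by norm_num)
    linarith
  have t2 : 2 * n * (z * y * y) / z ^ J ≤ Real.exp (-(Real.log n ^ 2)) / 2 := by
    have e : 2 * n * (z * y * y) / z ^ J =
        Real.exp (-(J * Real.log z - Real.log n - Real.log (2 * (z * y * y)))) := by
      rw [show -(J * Real.log z - Real.log n - Real.log (2 * (z * y * y))) =
        Real.log n + Real.log (2 * (z * y * y)) - J * Real.log z by ring, Real.exp_sub, Real.exp_add,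
        Real.exp_log hnp, Real.exp_log (by positivity), ← Real.log_pow, Real.exp_log (by positivity)]
      ring
    rw [e]
    apply half
    have : (r - 1) * Real.log z ≤ J * Real.log z := by gcongr
    linarith
  linarith
end

section
/- Fix a constant ε > 0. There exist constants c₃ > 0, c > 0 and a threshold n₀ (all depending only on ε) such that for all integers n ≥ n₀ and m with (1+ε)·n ≤ m, the random cuckoo graph with n edges on parts of size m satisfies: the probability that (1/(2m))·∑_{v} C(v) > c₃ (the sum over all 2m vertices v) is at most n^{−c·log n}. -/
open Classical

namespace Cuckoo

/-- One traversal of an item with hash values `p`. -/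
def Step {m : ℕ} (p : Fin m × Fin m) (a b : Fin m ⊕ Fin m) : Prop :=
  (a = Sum.inl p.1 ∧ b = Sum.inr p.2) ∨ (a = Sum.inr p.2 ∧ b = Sum.inl p.1)

theorem Step.symm {m : ℕ} {p : Fin m × Fin m} {a b : Fin m ⊕ Fin m} (h : Step p a b) :
    Step p b a := by
  rcases h with ⟨h1, h2⟩ | ⟨h1, h2⟩
  · exact Or.inr ⟨h2, h1⟩
  · exact Or.inl ⟨h2, h1⟩

/-- Walk from `a` to `b` through the listed items. -/
def IsPath {n m : ℕ} (ω : Fin n → Fin m × Fin m) :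
    (Fin m ⊕ Fin m) → List (Fin n) → (Fin m ⊕ Fin m) → Prop
  | a, [], b => a = b
  | a, x :: xs, b => ∃ c, Step (ω x) a c ∧ IsPath ω c xs b

theorem isPath_append {n m : ℕ} (ω : Fin n → Fin m × Fin m) (xs ys : List (Fin n))
    (a b : Fin m ⊕ Fin m) :
    IsPath ω a (xs ++ ys) b ↔ ∃ c, IsPath ω a xs c ∧ IsPath ω c ys b := by
  induction xs generalizing a with
  | nil => simp [IsPath]
  | cons x xs ih =>
    simp only [List.cons_append, IsPath, ih]
    constructor
    · rintro ⟨c, h1, d, h2, h3⟩; exact ⟨d, ⟨c, h1, h2⟩, h3⟩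
    · rintro ⟨d, ⟨c, h1, h2⟩, h3⟩; exact ⟨c, h1, d, h2, h3⟩

theorem isPath_reverse {n m : ℕ} (ω : Fin n → Fin m × Fin m) (xs : List (Fin n))
    (a b : Fin m ⊕ Fin m) (h : IsPath ω a xs b) : IsPath ω b xs.reverse a := by
  induction xs generalizing a with
  | nil => simpa [IsPath] using h.symm
  | cons x xs ih =>
    obtain ⟨c, h1, h2⟩ := h
    rw [List.reverse_cons, isPath_append]
    exact ⟨c, ih c h2, a, h1.symm, rfl⟩

/-- Every item connected to `v` is the last item of a walk from `v` without repeated items. -/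
theorem exists_nodup_path {n m : ℕ} (ω : Fin n → Fin m × Fin m) (v : Fin m ⊕ Fin m) (x : Fin n)
    (N : ℕ) : ∀ (ys : List (Fin n)) (b : Fin m ⊕ Fin m), ys.length ≤ N →
      IsPath ω v (ys ++ [x]) b →
      ∃ zs b, IsPath ω v (zs ++ [x]) b ∧ (zs ++ [x]).Nodup := by
  induction N with
  | zero =>
    intro ys b h hp
    have : ys = [] := List.eq_nil_of_length_eq_zero (by omega)
    subst this
    exact ⟨[], b, hp, by simp⟩
  | succ N ih =>
    intro ys b h hp
    by_cases hx : x ∈ ys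
    · obtain ⟨A, B, rfl⟩ := List.append_of_mem hx
      have e : A ++ x :: B ++ [x] = (A ++ [x]) ++ (B ++ [x]) := by simp
      rw [e, isPath_append] at hp
      obtain ⟨c, hc, -⟩ := hp
      exact ih A c (by simp at h; omega) hc
    by_cases hd : ys.Nodup
    · exact ⟨ys, b, hp, by
        rw [List.nodup_append]; refine ⟨hd, by simp, ?_⟩
        intro a ha b hb; simp at hb; subst hb; rintro rfl; exact hx ha⟩
    obtain ⟨y, hy⟩ : ∃ y, List.Duplicate y ys := by
      by_contra hcon
      push Not at hcon
      exact hd (List.nodup_iff_forall_not_duplicate.mpr hcon)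
    have hsub : List.Sublist [y, y] ys := List.duplicate_iff_sublist.mp hy
    obtain ⟨A, R, rfl, hA, hR⟩ := List.cons_sublist_iff.mp hsub
    obtain ⟨A1, A2, rfl⟩ := List.append_of_mem hA
    obtain ⟨B1, B2, rfl⟩ := List.append_of_mem (List.singleton_sublist.mp hR)
    have e : A1 ++ y :: A2 ++ (B1 ++ y :: B2) ++ [x]
      = A1 ++ ([y] ++ ((A2 ++ B1) ++ ([y] ++ (B2 ++ [x])))) := by simp
    rw [e, isPath_append] at hp
    obtain ⟨s, h1, hp⟩ := hp
    rw [isPath_append] at hp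
    obtain ⟨t, h2, hp⟩ := hp
    rw [isPath_append] at hp
    obtain ⟨s', h3, hp⟩ := hp
    rw [isPath_append] at hp
    obtain ⟨t', h4, h5⟩ := hp
    obtain ⟨t1, h2, e2⟩ := h2
    obtain ⟨t2, h4, e4⟩ := h4
    change t1 = t at e2
    change t2 = t' at e4
    subst e2 e4
    have : t2 = s ∨ t2 = t1 := by
      rcases h2 with ⟨a1, a2⟩ | ⟨a1, a2⟩ <;> rcases h4 with ⟨a3, a4⟩ | ⟨a3, a4⟩
      · exact Or.inr (a4.trans a2.symm)
      · exact Or.inl (a4.trans a1.symm)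
      · exact Or.inl (a4.trans a1.symm)
      · exact Or.inr (a4.trans a2.symm)
    simp at h
    rcases this with rfl | rfl
    · refine ih (A1 ++ B2) b (by simp; omega) ?_
      rw [List.append_assoc, isPath_append]
      exact ⟨_, h1, h5⟩
    · refine ih (A1 ++ ([y] ++ B2)) b (by simp; omega) ?_
      rw [List.append_assoc, isPath_append]
      refine ⟨s, h1, ?_⟩
      rw [List.append_assoc, isPath_append]
      exact ⟨_, ⟨_, h2, rfl⟩, h5⟩

theorem conn_path {n m : ℕ} (ω : Fin n → Fin m × Fin m) (a b : Fin m ⊕ Fin m)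
    (h : cuckooConn n m (fun x => (ω x).1) (fun x => (ω x).2) a b) :
    ∃ xs, IsPath ω a xs b := by
  induction h with
  | rel a b h =>
    obtain ⟨x, h1, h2⟩ := h
    exact ⟨[x], b, Or.inl ⟨h1, h2⟩, rfl⟩
  | refl a => exact ⟨[], rfl⟩
  | symm a b _ ih => obtain ⟨xs, h⟩ := ih; exact ⟨_, isPath_reverse ω _ _ _ h⟩
  | trans a b c _ _ ih1 ih2 =>
    obtain ⟨xs, h⟩ := ih1
    obtain ⟨ys, h'⟩ := ih2
    exact ⟨xs ++ ys, (isPath_append _ _ _ _ _).mpr ⟨_, h, h'⟩⟩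

theorem conn_nodup {n m : ℕ} (ω : Fin n → Fin m × Fin m) (v : Fin m ⊕ Fin m) (x : Fin n)
    (h : cuckooConn n m (fun x => (ω x).1) (fun x => (ω x).2) (Sum.inl (ω x).1) v) :
    ∃ zs b, IsPath ω v (zs ++ [x]) b ∧ (zs ++ [x]).Nodup := by
  obtain ⟨xs, hp⟩ := conn_path ω _ _ h
  refine exists_nodup_path ω v x xs.reverse.length xs.reverse (Sum.inr (ω x).2) le_rfl ?_
  rw [isPath_append]
  exact ⟨_, isPath_reverse _ _ _ _ hp, _, Or.inl ⟨rfl, rfl⟩, rfl⟩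

/-- Weighted sum over item-disjoint paths of length `j` from `a` avoiding `L`. -/
noncomputable def pathSum {n m : ℕ} (ω : Fin n → Fin m × Fin m)
    (φ : (Fin m ⊕ Fin m) → List (Fin n) → ℝ) :
    ℕ → (Fin m ⊕ Fin m) → List (Fin n) → ℝ
  | 0, a, L => φ a L
  | j + 1, a, L => ∑ x : Fin n, if x ∈ L then 0 else
      ∑ c : Fin m ⊕ Fin m, if Step (ω x) a c then pathSum ω φ j c (x :: L) else 0

theorem pathSum_nonneg {n m : ℕ} (ω : Fin n → Fin m × Fin m)
    (φ : (Fin m ⊕ Fin m) → List (Fin n) → ℝ) (h : ∀ a L, 0 ≤ φ a L) (j : ℕ) :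
    ∀ a L, 0 ≤ pathSum ω φ j a L := by
  induction j with
  | zero => exact h
  | succ j ih =>
    intro a L
    refine Finset.sum_nonneg fun x _ => ?_
    split_ifs
    · exact le_rfl
    refine Finset.sum_nonneg fun c _ => ?_
    split_ifs
    · exact ih _ _
    · exact le_rfl

theorem pathSum_sum {n m : ℕ} {ι : Type} (s : Finset ι) (ω : Fin n → Fin m × Fin m)
    (φ : ι → (Fin m ⊕ Fin m) → List (Fin n) → ℝ) (j : ℕ) :
    ∀ a L, ∑ i ∈ s, pathSum ω (φ i) j a L = pathSum ω (fun b L => ∑ i ∈ s, φ i b L) j a L := by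
  induction j with
  | zero => intro a L; rfl
  | succ j ih =>
    intro a L
    simp only [pathSum]
    rw [Finset.sum_comm]
    refine Finset.sum_congr rfl fun x _ => ?_
    split_ifs
    · simp
    rw [Finset.sum_comm]
    refine Finset.sum_congr rfl fun c _ => ?_
    split_ifs
    · exact ih _ _
    · simp

theorem le_pathSum {n m : ℕ} (ω : Fin n → Fin m × Fin m)
    (φ : (Fin m ⊕ Fin m) → List (Fin n) → ℝ) (h : ∀ a L, 0 ≤ φ a L) (xs : List (Fin n)) :
    ∀ a b L, IsPath ω a xs b → xs.Nodup → (∀ x ∈ xs, x ∉ L) →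
      φ b (xs.reverse ++ L) ≤ pathSum ω φ xs.length a L := by
  induction xs with
  | nil => intro a b L hp _ _; cases hp; simp [pathSum]
  | cons x xs ih =>
    intro a b L hp hn hd
    obtain ⟨c, hs, hp⟩ := hp
    have hn' := List.nodup_cons.mp hn
    have h1 := ih c b (x :: L) hp hn'.2 (by
      intro y hy; simp only [List.mem_cons, not_or]
      refine ⟨?_, hd y (by simp [hy])⟩
      rintro rfl; exact hn'.1 hy)
    have e : (x :: xs).reverse ++ L = xs.reverse ++ x :: L := by simp
    rw [e]
    refine h1.trans ?_
    simp only [List.length_cons, pathSum]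
    refine le_trans ?_ (Finset.single_le_sum (f := fun y => if y ∈ L then (0:ℝ) else
      ∑ c : Fin m ⊕ Fin m, if Step (ω y) a c then pathSum ω φ xs.length c (y :: L) else 0)
      (fun y _ => ?_) (Finset.mem_univ x))
    · simp only [if_neg (hd x (by simp))]
      refine le_trans ?_ (Finset.single_le_sum (f := fun d =>
        if Step (ω x) a d then pathSum ω φ xs.length d (x :: L) else 0)
        (fun d _ => ?_) (Finset.mem_univ c))
      · simp [hs]
      · split_ifs
        · exact pathSum_nonneg _ _ h _ _ _
        · exact le_rfl
    · split_ifs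
      · exact le_rfl
      · refine Finset.sum_nonneg fun d _ => ?_
        split_ifs
        · exact pathSum_nonneg _ _ h _ _ _
        · exact le_rfl

/-- Cylinder of assignments agreeing with `g` on `L`. -/
noncomputable def Cyl {n m : ℕ} (L : List (Fin n)) (g : Fin n → Fin m × Fin m) :
    Finset (Fin n → Fin m × Fin m) :=
  Finset.univ.filter (fun ω => ∀ x ∈ L, ω x = g x)

theorem card_cyl {n m : ℕ} (hm : 0 < m) (L : List (Fin n)) (hL : L.Nodup)
    (g : Fin n → Fin m × Fin m) :
    ((Cyl L g).card : ℝ) = ((m:ℝ)^2)^n * (1 / (m:ℝ)^2) ^ L.length := by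
  have e : Cyl L g = Fintype.piFinset (fun x => if x ∈ L then {g x} else Finset.univ) := by
    ext ω
    simp only [Cyl, Finset.mem_filter, Finset.mem_univ, true_and, Fintype.mem_piFinset]
    refine forall_congr' fun x => ?_
    by_cases h : x ∈ L <;> simp [h]
  have hm' : (m:ℝ) ≠ 0 := by positivity
  rw [e, Fintype.card_piFinset]
  push_cast
  have : ∀ x : Fin n, (((if x ∈ L then {g x} else Finset.univ : Finset (Fin m × Fin m)).card : ℕ) : ℝ)
      = (m:ℝ)^2 * (if x ∈ L.toFinset then (1 / (m:ℝ)^2) else 1) := by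
    intro x
    by_cases h : x ∈ L
    · simp [h]; field_simp
    · simp [h]; ring
  simp_rw [this]
  rw [Finset.prod_mul_distrib, Finset.prod_ite_mem]
  simp [List.toFinset_card_of_nodup hL]

theorem sum_cyl {n m : ℕ} (L : List (Fin n)) (g : Fin n → Fin m × Fin m) (x : Fin n)
    (hx : x ∉ L) (f : (Fin n → Fin m × Fin m) → ℝ) :
    ∑ ω ∈ Cyl L g, f ω = ∑ p : Fin m × Fin m, ∑ ω ∈ Cyl (x :: L) (Function.update g x p), f ω := by
  rw [← Finset.sum_fiberwise (Cyl L g) (fun ω => ω x) f]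
  refine Finset.sum_congr rfl fun p _ => ?_
  refine Finset.sum_congr ?_ fun _ _ => rfl
  ext ω
  simp only [Cyl, Finset.mem_filter, Finset.mem_univ, true_and, List.mem_cons, forall_eq_or_imp,
    Function.update_self]
  rw [and_comm]
  refine and_congr_right fun _ => ?_
  refine forall₂_congr fun y hy => ?_
  rw [Function.update_of_ne]
  rintro rfl; exact hx hy

theorem sum_step {m : ℕ} (a : Fin m ⊕ Fin m) (t : ℝ) :
    ∑ p : Fin m × Fin m, ∑ c : Fin m ⊕ Fin m, (if Step p a c then t else 0) = m * t := by
  rw [Fintype.sum_prod_type]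
  rcases a with i | i
  · simp [Step, ite_and]
  · simp [Step, ite_and]

theorem pathSum_bound {n m : ℕ} (hm : 0 < m)
    (Φ : (Fin n → Fin m × Fin m) → (Fin m ⊕ Fin m) → List (Fin n) → ℝ) (s : ℝ) (hs : 0 ≤ s)
    (u : ℕ)
    (H : ∀ L g b, L.Nodup → L.length ≤ u →
      ∑ ω ∈ Cyl L g, Φ ω b L ≤ s * (1 / (m:ℝ)^2) ^ L.length) (j : ℕ) :
    ∀ L g a, L.Nodup → L.length + j ≤ u →
      ∑ ω ∈ Cyl L g, pathSum ω (Φ ω) j a L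
        ≤ ((n:ℝ) / m) ^ j * s * (1 / (m:ℝ)^2) ^ L.length := by
  induction j with
  | zero => intro L g a h1 h2; simpa [pathSum] using H L g a h1 (by omega)
  | succ j ih =>
    intro L g a h1 h2
    simp only [pathSum]
    rw [Finset.sum_comm]
    have hm' : (m:ℝ) ≠ 0 := by positivity
    set t : ℝ := ((n:ℝ) / m) ^ j * s * (1 / (m:ℝ)^2) ^ (L.length + 1) with ht
    have ht0 : 0 ≤ t := by positivity
    have key : ∀ x : Fin n, ∑ ω ∈ Cyl L g, (if x ∈ L then (0:ℝ) else
        ∑ c : Fin m ⊕ Fin m, if Step (ω x) a c then pathSum ω (Φ ω) j c (x :: L) else 0)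
        ≤ m * t := by
      intro x
      by_cases hx : x ∈ L
      · simp [hx]; positivity
      simp only [hx, if_false]
      rw [sum_cyl L g x hx, ← sum_step a t]
      refine Finset.sum_le_sum fun p _ => ?_
      rw [Finset.sum_comm]
      refine Finset.sum_le_sum fun c _ => ?_
      have e : ∀ ω ∈ Cyl (x :: L) (Function.update g x p),
          (if Step (ω x) a c then pathSum ω (Φ ω) j c (x :: L) else 0)
          = (if Step p a c then pathSum ω (Φ ω) j c (x :: L) else 0) := by
        intro ω hω
        simp only [Cyl, Finset.mem_filter, Finset.mem_univ, true_and, List.mem_cons,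
          forall_eq_or_imp, Function.update_self] at hω
        rw [hω.1]
      rw [Finset.sum_congr rfl e]
      split_ifs
      · refine (ih (x :: L) _ c (by simp [hx, h1]) (by simp; omega)).trans ?_
        simp [ht]
      · simp
    refine (Finset.sum_le_sum fun x _ => key x).trans ?_
    simp only [Finset.sum_const, Finset.card_univ, Fintype.card_fin, nsmul_eq_mul]
    rw [ht]
    apply le_of_eq
    rw [pow_succ, pow_succ ((n:ℝ) / m)]
    field_simp

theorem pathSum_bound_range {n m : ℕ} (hm : 0 < m)
    (Φ : (Fin n → Fin m × Fin m) → (Fin m ⊕ Fin m) → List (Fin n) → ℝ) (s : ℝ) (hs : 0 ≤ s)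
    (u ℓ : ℕ) (K : ℝ) (hK : ∑ j ∈ Finset.range (ℓ + 1), ((n:ℝ) / m) ^ j ≤ K)
    (H : ∀ L g b, L.Nodup → L.length ≤ u →
      ∑ ω ∈ Cyl L g, Φ ω b L ≤ s * (1 / (m:ℝ)^2) ^ L.length)
    (L : List (Fin n)) (g : Fin n → Fin m × Fin m) (a : Fin m ⊕ Fin m) (hL : L.Nodup)
    (hu : L.length + ℓ ≤ u) :
    ∑ ω ∈ Cyl L g, ∑ j ∈ Finset.range (ℓ + 1), pathSum ω (Φ ω) j a L
      ≤ K * s * (1 / (m:ℝ)^2) ^ L.length := by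
  rw [Finset.sum_comm]
  calc _ ≤ ∑ j ∈ Finset.range (ℓ + 1), ((n:ℝ) / m) ^ j * s * (1 / (m:ℝ)^2) ^ L.length := by
        refine Finset.sum_le_sum fun j hj => ?_
        have := Finset.mem_range.mp hj
        exact pathSum_bound hm Φ s hs u H j L g a hL (by omega)
    _ = (∑ j ∈ Finset.range (ℓ + 1), ((n:ℝ) / m) ^ j) * s * (1 / (m:ℝ)^2) ^ L.length := by
        rw [Finset.sum_mul, Finset.sum_mul]
    _ ≤ _ := by gcongr

/-- Weighted sum over paths starting at an endpoint of an item in `L`. -/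
noncomputable def attach {n m : ℕ} (ω : Fin n → Fin m × Fin m) (ℓ : ℕ)
    (φ : (Fin m ⊕ Fin m) → List (Fin n) → ℝ) (L : List (Fin n)) : ℝ :=
  ∑ z ∈ L.toFinset, (∑ j ∈ Finset.range (ℓ + 1), pathSum ω φ j (Sum.inl (ω z).1) L
    + ∑ j ∈ Finset.range (ℓ + 1), pathSum ω φ j (Sum.inr (ω z).2) L)

theorem attach_nonneg {n m : ℕ} (ω : Fin n → Fin m × Fin m) (ℓ : ℕ)
    (φ : (Fin m ⊕ Fin m) → List (Fin n) → ℝ) (h : ∀ a L, 0 ≤ φ a L) (L : List (Fin n)) :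
    0 ≤ attach ω ℓ φ L := by
  refine Finset.sum_nonneg fun z _ => add_nonneg ?_ ?_ <;>
  exact Finset.sum_nonneg fun j _ => pathSum_nonneg _ _ h _ _ _

theorem attach_sum {n m : ℕ} {ι : Type} (s : Finset ι) (ω : Fin n → Fin m × Fin m) (ℓ : ℕ)
    (φ : ι → (Fin m ⊕ Fin m) → List (Fin n) → ℝ) (L : List (Fin n)) :
    ∑ i ∈ s, attach ω ℓ (φ i) L = attach ω ℓ (fun b L => ∑ i ∈ s, φ i b L) L := by
  unfold attach
  rw [Finset.sum_comm]
  refine Finset.sum_congr rfl fun z _ => ?_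
  rw [Finset.sum_add_distrib]
  congr 1 <;>
  · rw [Finset.sum_comm]
    exact Finset.sum_congr rfl fun j _ => pathSum_sum _ _ _ _ _ _

theorem attach_bound {n m : ℕ} (hm : 0 < m)
    (Φ : (Fin n → Fin m × Fin m) → (Fin m ⊕ Fin m) → List (Fin n) → ℝ) (s : ℝ) (hs : 0 ≤ s)
    (u ℓ : ℕ) (K : ℝ) (hK : ∑ j ∈ Finset.range (ℓ + 1), ((n:ℝ) / m) ^ j ≤ K)
    (H : ∀ L g b, L.Nodup → L.length ≤ u →
      ∑ ω ∈ Cyl L g, Φ ω b L ≤ s * (1 / (m:ℝ)^2) ^ L.length)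
    (L : List (Fin n)) (g : Fin n → Fin m × Fin m) (hL : L.Nodup)
    (hu : L.length + ℓ ≤ u) :
    ∑ ω ∈ Cyl L g, attach ω ℓ (Φ ω) L
      ≤ L.length * (2 * K * s * (1 / (m:ℝ)^2) ^ L.length) := by
  unfold attach
  rw [Finset.sum_comm]
  have key : ∀ z ∈ L.toFinset, ∑ ω ∈ Cyl L g,
      (∑ j ∈ Finset.range (ℓ + 1), pathSum ω (Φ ω) j (Sum.inl (ω z).1) L
    + ∑ j ∈ Finset.range (ℓ + 1), pathSum ω (Φ ω) j (Sum.inr (ω z).2) L)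
      ≤ 2 * K * s * (1 / (m:ℝ)^2) ^ L.length := by
    intro z hz
    have e : ∀ ω ∈ Cyl L g, (∑ j ∈ Finset.range (ℓ + 1), pathSum ω (Φ ω) j (Sum.inl (ω z).1) L
      + ∑ j ∈ Finset.range (ℓ + 1), pathSum ω (Φ ω) j (Sum.inr (ω z).2) L)
      = (∑ j ∈ Finset.range (ℓ + 1), pathSum ω (Φ ω) j (Sum.inl (g z).1) L
      + ∑ j ∈ Finset.range (ℓ + 1), pathSum ω (Φ ω) j (Sum.inr (g z).2) L) := by
      intro ω hω
      simp only [Cyl, Finset.mem_filter, Finset.mem_univ, true_and] at hω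
      rw [hω z (List.mem_toFinset.mp hz)]
    rw [Finset.sum_congr rfl e, Finset.sum_add_distrib]
    have h1 := pathSum_bound_range hm Φ s hs u ℓ K hK H L g (Sum.inl (g z).1) hL hu
    have h2 := pathSum_bound_range hm Φ s hs u ℓ K hK H L g (Sum.inr (g z).2) hL hu
    linarith
  refine (Finset.sum_le_sum key).trans ?_
  rw [Finset.sum_const, List.toFinset_card_of_nodup hL, nsmul_eq_mul]

/-- Payload: the last item is `x`. -/
noncomputable def lastW {n m : ℕ} (f : ℝ) (x : Fin n) (_b : Fin m ⊕ Fin m) (L : List (Fin n)) : ℝ :=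
  if L.head? = some x then f else 0

/-- Payload of the first path of a pair of paths attached to the revealed items. -/
noncomputable def pairW {n m : ℕ} (ω : Fin n → Fin m × Fin m) (ℓ : ℕ) (f : ℝ)
    (v : Fin m ⊕ Fin m) (x : Fin n) (b : Fin m ⊕ Fin m) (L : List (Fin n)) : ℝ :=
  if b = v then attach ω ℓ (lastW f x) L + (if x ∈ L then f else 0) else 0

theorem lastW_nonneg {n m : ℕ} (f : ℝ) (hf : 0 ≤ f) (x : Fin n) (b : Fin m ⊕ Fin m)
    (L : List (Fin n)) : 0 ≤ lastW f x b L := by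
  unfold lastW; split_ifs <;> simp [hf]

theorem pairW_nonneg {n m : ℕ} (ω : Fin n → Fin m × Fin m) (ℓ : ℕ) (f : ℝ) (hf : 0 ≤ f)
    (v : Fin m ⊕ Fin m) (x : Fin n) (b : Fin m ⊕ Fin m) (L : List (Fin n)) :
    0 ≤ pairW ω ℓ f v x b L := by
  unfold pairW
  split_ifs
  · exact add_nonneg (attach_nonneg _ _ _ (lastW_nonneg f hf x) _) hf
  · exact add_nonneg (attach_nonneg _ _ _ (lastW_nonneg f hf x) _) le_rfl
  · exact le_rfl

/-- No item-simple path is longer than `ℓ`. -/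
def Short {n m : ℕ} (ℓ : ℕ) (ω : Fin n → Fin m × Fin m) : Prop :=
  ∀ v xs b, IsPath ω v xs b → xs.Nodup → xs.length ≤ ℓ

/-- A single path from an endpoint of an item of `L` is counted by `attach`. -/
theorem le_attach {n m : ℕ} (ω : Fin n → Fin m × Fin m) (ℓ : ℕ)
    (φ : (Fin m ⊕ Fin m) → List (Fin n) → ℝ) (h : ∀ a L, 0 ≤ φ a L) (L : List (Fin n))
    (z : Fin n) (hz : z ∈ L) (a c b : Fin m ⊕ Fin m) (hs : Step (ω z) a c) (xs : List (Fin n))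
    (hp : IsPath ω a xs b) (hn : xs.Nodup) (hd : ∀ x ∈ xs, x ∉ L) (hl : xs.length ≤ ℓ) :
    φ b (xs.reverse ++ L) ≤ attach ω ℓ φ L := by
  refine (le_pathSum ω φ h xs a b L hp hn hd).trans ?_
  have hnn : ∀ a', 0 ≤ ∑ j ∈ Finset.range (ℓ + 1), pathSum ω φ j a' L := fun a' =>
    Finset.sum_nonneg fun j _ => pathSum_nonneg _ _ h _ _ _
  have h1 : pathSum ω φ xs.length a L ≤ ∑ j ∈ Finset.range (ℓ + 1), pathSum ω φ j a L :=
    Finset.single_le_sum (f := fun j => pathSum ω φ j a L)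
      (fun j _ => pathSum_nonneg _ _ h _ _ _) (Finset.mem_range.mpr (by omega))
  refine h1.trans ?_
  unfold attach
  refine le_trans ?_ (Finset.single_le_sum (f := fun z =>
    (∑ j ∈ Finset.range (ℓ + 1), pathSum ω φ j (Sum.inl (ω z).1) L
    + ∑ j ∈ Finset.range (ℓ + 1), pathSum ω φ j (Sum.inr (ω z).2) L))
    (fun z _ => add_nonneg (hnn _) (hnn _)) (List.mem_toFinset.mpr hz))
  rcases hs with ⟨rfl, -⟩ | ⟨rfl, -⟩
  · exact le_add_of_nonneg_right (hnn _)
  · exact le_add_of_nonneg_left (hnn _)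

/-- Splitting a list at the first hit. -/
theorem split_first {α : Type} (p : α → Prop) (xs : List α) (h : ∃ x ∈ xs, p x) :
    ∃ A y B, xs = A ++ y :: B ∧ p y ∧ ∀ x ∈ A, ¬ p x := by
  induction xs with
  | nil => simp at h
  | cons x xs ih =>
    by_cases hx : p x
    · exact ⟨[], x, xs, rfl, hx, by simp⟩
    · obtain ⟨A, y, B, rfl, h2, h3⟩ := ih (by
        obtain ⟨w, hw, hpw⟩ := h
        rcases List.mem_cons.mp hw with rfl | hw
        · exact absurd hpw hx
        · exact ⟨w, hw, hpw⟩)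
      exact ⟨x :: A, y, B, rfl, h2, by simpa [hx] using h3⟩

theorem split_last {α : Type} (p : α → Prop) (xs : List α) (h : ∃ x ∈ xs, p x) :
    ∃ A y B, xs = A ++ y :: B ∧ p y ∧ ∀ x ∈ B, ¬ p x := by
  obtain ⟨A, y, B, h1, h2, h3⟩ := split_first p xs.reverse (by simpa using h)
  refine ⟨B.reverse, y, A.reverse, ?_, h2, by simpa using h3⟩
  rw [← List.reverse_reverse xs, h1]; simp

theorem conn_le {n m : ℕ} (ω : Fin n → Fin m × Fin m) (ℓ : ℕ) (hS : Short ℓ ω) (f : ℝ)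
    (hf : 0 ≤ f) (v : Fin m ⊕ Fin m) (x : Fin n)
    (h : cuckooConn n m (fun x => (ω x).1) (fun x => (ω x).2) (Sum.inl (ω x).1) v)
    (L : List (Fin n)) :
    f ≤ ∑ j ∈ Finset.range (ℓ + 1), pathSum ω (lastW f x) j v L
      + attach ω ℓ (pairW ω ℓ f v x) L := by
  obtain ⟨zs, b, hp, hn⟩ := conn_nodup ω v x h
  have hl := hS _ _ _ hp hn
  have hnn : 0 ≤ ∑ j ∈ Finset.range (ℓ + 1), pathSum ω (lastW f x) j v L :=
    Finset.sum_nonneg fun j _ => pathSum_nonneg _ _ (lastW_nonneg f hf x) _ _ _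
  by_cases hd : ∃ y ∈ zs ++ [x], y ∈ L
  · refine le_trans ?_ (le_add_of_nonneg_left hnn)
    obtain ⟨A, y, B, e, hy, hA⟩ := split_first (· ∈ L) _ hd
    obtain ⟨C, z, D, e', hz, hD⟩ := split_last (· ∈ L) (y :: B) ⟨y, by simp, hy⟩
    have hp1 := hp
    rw [e, isPath_append] at hp1
    obtain ⟨a, ha, c, hc, -⟩ := hp1
    have hn1 := hn
    rw [e, List.nodup_append] at hn1
    have hlA : A.length ≤ ℓ := by rw [e] at hl; simp at hl; omega
    refine le_trans ?_ (le_attach ω ℓ (pairW ω ℓ f v x) (pairW_nonneg ω ℓ f hf v x) L y hy a c v hc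
      A.reverse (isPath_reverse _ _ _ _ ha) (by simpa using hn1.1) (by simpa using hA)
      (by simpa using hlA))
    rw [List.reverse_reverse]
    unfold pairW
    rw [if_pos rfl]
    rcases List.eq_nil_or_concat D with rfl | ⟨D', w, hD'⟩
    · have : x = z := by
        rw [e', ← List.append_assoc] at e
        exact (List.append_inj_right' e rfl |> fun q => by simpa using q)
      subst this
      rw [if_pos (by simp [hz])]
      exact le_add_of_nonneg_left (attach_nonneg _ _ _ (lastW_nonneg f hf x) _)
    · have hw : w = x := by
        have e2 := e
        rw [e', hD'] at e2
        have : zs ++ [x] = (A ++ (C ++ z :: D')) ++ [w] := by rw [e2]; simp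
        have := List.append_inj_right' this rfl
        simpa using this.symm
      subst hw
      have hp2 := hp
      rw [e, e', isPath_append] at hp2
      obtain ⟨a2, -, hp2⟩ := hp2
      rw [isPath_append] at hp2
      obtain ⟨c2, -, d2, hs2, hp2⟩ := hp2
      have hDn : D.Nodup := by
        have := hn1.2.1
        rw [e', List.nodup_append] at this
        exact (List.nodup_cons.mp this.2.1).2
      have hlD : D.length ≤ ℓ := by
        rw [e, e'] at hl; simp at hl; omega
      have hh := le_attach ω ℓ (lastW f w) (lastW_nonneg f hf w) (A ++ L) z (by simp [hz]) d2 c2 b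
        hs2.symm D hp2 hDn (by
          intro q hq
          rw [List.mem_append, not_or]
          refine ⟨fun hqA => ?_, hD q hq⟩
          refine hn1.2.2 q hqA q ?_ rfl
          rw [e']; simp [hq]) hlD
      refine le_trans ?_ (hh.trans (le_add_of_nonneg_right (by split_ifs <;> simp [hf])))
      rw [hD']
      simp [lastW]
  · push Not at hd
    refine le_trans ?_ (le_add_of_nonneg_right
      (attach_nonneg _ _ _ (pairW_nonneg ω ℓ f hf v x) _))
    have h1 := le_pathSum ω (lastW f x) (lastW_nonneg f hf x) _ v b L hp hn hd
    have h2 : f ≤ lastW f x b ((zs ++ [x]).reverse ++ L) := by simp [lastW]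
    refine h2.trans (h1.trans ?_)
    exact Finset.single_le_sum (f := fun j => pathSum ω (lastW f x) j v L)
      (fun j _ => pathSum_nonneg _ _ (lastW_nonneg f hf x) _ _ _)
      (Finset.mem_range.mpr (by omega))

/-- Number of connected (vertex, item) pairs. -/
noncomputable def tot {n m : ℕ} (ω : Fin n → Fin m × Fin m) : ℝ :=
  ∑ v : Fin m ⊕ Fin m, (cuckooC n m (fun x => (ω x).1) (fun x => (ω x).2) v : ℝ)

theorem tot_eq {n m : ℕ} (ω : Fin n → Fin m × Fin m) :
    tot ω = ∑ v : Fin m ⊕ Fin m, ∑ x : Fin n,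
      if cuckooConn n m (fun x => (ω x).1) (fun x => (ω x).2) (Sum.inl (ω x).1) v
        then (1:ℝ) else 0 := by
  unfold tot cuckooC
  refine Finset.sum_congr rfl fun v _ => ?_
  rw [Nat.card_eq_fintype_card, Fintype.card_subtype]
  simp

theorem tot_le {n m : ℕ} (ω : Fin n → Fin m × Fin m) (ℓ : ℕ) (hS : Short ℓ ω) (f : ℝ)
    (hf : 0 ≤ f) (L : List (Fin n)) :
    tot ω * f ≤ ∑ v : Fin m ⊕ Fin m, ∑ j ∈ Finset.range (ℓ + 1),
        pathSum ω (fun b L => ∑ x : Fin n, lastW f x b L) j v L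
      + attach ω ℓ (fun b L => ∑ v : Fin m ⊕ Fin m, ∑ x : Fin n, pairW ω ℓ f v x b L) L := by
  have h1 : tot ω * f ≤ ∑ v : Fin m ⊕ Fin m, ∑ x : Fin n,
      (∑ j ∈ Finset.range (ℓ + 1), pathSum ω (lastW f x) j v L
      + attach ω ℓ (pairW ω ℓ f v x) L) := by
    rw [tot_eq, Finset.sum_mul]
    refine Finset.sum_le_sum fun v _ => ?_
    rw [Finset.sum_mul]
    refine Finset.sum_le_sum fun x _ => ?_
    split_ifs with h
    · rw [one_mul]; exact conn_le ω ℓ hS f hf v x h L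
    · rw [zero_mul]
      exact add_nonneg (Finset.sum_nonneg fun j _ => pathSum_nonneg _ _ (lastW_nonneg f hf x) _ _ _)
        (attach_nonneg _ _ _ (pairW_nonneg ω ℓ f hf v x) _)
  refine h1.trans (le_of_eq ?_)
  simp_rw [Finset.sum_add_distrib, attach_sum]
  congr 1
  refine Finset.sum_congr rfl fun v _ => ?_
  rw [Finset.sum_comm]
  exact Finset.sum_congr rfl fun j _ => pathSum_sum _ _ _ _ _ _

theorem sum_lastW_le {n m : ℕ} (f : ℝ) (hf : 0 ≤ f) (b : Fin m ⊕ Fin m) (L : List (Fin n)) :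
    ∑ x : Fin n, lastW f x b L ≤ f := by
  unfold lastW
  cases L with
  | nil => simpa using hf
  | cons y L => simp

theorem sum_pairW {n m : ℕ} (ω : Fin n → Fin m × Fin m) (ℓ : ℕ) (f : ℝ)
    (b : Fin m ⊕ Fin m) (L : List (Fin n)) (hL : L.Nodup) :
    ∑ v : Fin m ⊕ Fin m, ∑ x : Fin n, pairW ω ℓ f v x b L
      = attach ω ℓ (fun b L => ∑ x : Fin n, lastW f x b L) L + L.length * f := by
  rw [Finset.sum_comm]
  simp only [pairW, Finset.sum_ite_eq, Finset.mem_univ, if_true]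
  rw [Finset.sum_add_distrib, attach_sum]
  congr 1
  simp_rw [← List.mem_toFinset]
  rw [Finset.sum_ite_mem]
  simp [List.toFinset_card_of_nodup hL]

theorem step_bound {n m : ℕ} (hm : 0 < m) (f : (Fin n → Fin m × Fin m) → ℝ) (hf : ∀ ω, 0 ≤ f ω)
    (s : ℝ) (hs : 0 ≤ s)
    (u ℓ : ℕ) (K : ℝ) (hK : ∑ j ∈ Finset.range (ℓ + 1), ((n:ℝ) / m) ^ j ≤ K)
    (H : ∀ L g, L.Nodup → L.length ≤ u →
      ∑ ω ∈ Cyl L g, f ω ≤ s * (1 / (m:ℝ)^2) ^ L.length)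
    (L : List (Fin n)) (g : Fin n → Fin m × Fin m) (hL : L.Nodup)
    (hu : L.length + 2 * ℓ ≤ u) :
    ∑ ω ∈ Cyl L g, (if Short ℓ ω then tot ω * f ω else 0)
      ≤ (2 * m * K + (2 * K) * (2 * K + 1) * (u:ℝ) ^ 2) * s * (1 / (m:ℝ)^2) ^ L.length := by
  have hK0 : 0 ≤ K := le_trans (Finset.sum_nonneg fun j _ => by positivity) hK
  have H1 : ∀ L g (b : Fin m ⊕ Fin m), L.Nodup → L.length ≤ u →
      ∑ ω ∈ Cyl L g, (fun ω b L => ∑ x : Fin n, lastW (f ω) x b L) ω b L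
        ≤ s * (1 / (m:ℝ)^2) ^ L.length := by
    intro L g b h1 h2
    refine le_trans (Finset.sum_le_sum fun ω _ => ?_) (H L g h1 h2)
    exact sum_lastW_le _ (hf ω) _ _
  have H2 : ∀ L g (b : Fin m ⊕ Fin m), L.Nodup → L.length ≤ u - ℓ →
      ∑ ω ∈ Cyl L g, (fun ω b L => ∑ v : Fin m ⊕ Fin m, ∑ x : Fin n, pairW ω ℓ (f ω) v x b L) ω b L
        ≤ ((2 * K + 1) * u * s) * (1 / (m:ℝ)^2) ^ L.length := by
    intro L g b h1 h2
    have hlu : (L.length : ℝ) ≤ u := by exact_mod_cast (by omega : L.length ≤ u)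
    have e : ∑ ω ∈ Cyl L g, (fun ω b L => ∑ v : Fin m ⊕ Fin m, ∑ x : Fin n,
        pairW ω ℓ (f ω) v x b L) ω b L = ∑ ω ∈ Cyl L g,
        (attach ω ℓ (fun b L => ∑ x : Fin n, lastW (f ω) x b L) L + L.length * f ω) :=
      Finset.sum_congr rfl fun ω _ => sum_pairW ω ℓ (f ω) b L h1
    rw [e, Finset.sum_add_distrib, ← Finset.mul_sum]
    have a1 := attach_bound hm (fun ω b L => ∑ x : Fin n, lastW (f ω) x b L) s hs u ℓ K hK H1 L g h1
      (by omega)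
    have a2 := H L g h1 (by omega)
    calc _ ≤ L.length * (2 * K * s * (1 / (m:ℝ)^2) ^ L.length)
          + L.length * (s * (1 / (m:ℝ)^2) ^ L.length) := by gcongr
      _ = L.length * ((2 * K + 1) * s * (1 / (m:ℝ)^2) ^ L.length) := by ring
      _ ≤ u * ((2 * K + 1) * s * (1 / (m:ℝ)^2) ^ L.length) := by gcongr
      _ = _ := by ring
  have hp : ∀ ω ∈ Cyl L g, (if Short ℓ ω then tot ω * f ω else 0) ≤
      ∑ v : Fin m ⊕ Fin m, ∑ j ∈ Finset.range (ℓ + 1),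
        pathSum ω (fun b L => ∑ x : Fin n, lastW (f ω) x b L) j v L
      + attach ω ℓ (fun b L => ∑ v : Fin m ⊕ Fin m, ∑ x : Fin n, pairW ω ℓ (f ω) v x b L) L := by
    intro ω _
    split_ifs with h
    · exact tot_le ω ℓ h (f ω) (hf ω) L
    · refine add_nonneg (Finset.sum_nonneg fun v _ => Finset.sum_nonneg fun j _ =>
        pathSum_nonneg _ _ (fun a L => Finset.sum_nonneg fun x _ => lastW_nonneg _ (hf ω) _ _ _) _ _ _)
        (attach_nonneg _ _ _ (fun a L => Finset.sum_nonneg fun v _ => Finset.sum_nonneg fun x _ =>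
          pairW_nonneg _ _ _ (hf ω) _ _ _ _) _)
  refine (Finset.sum_le_sum hp).trans ?_
  rw [Finset.sum_add_distrib, Finset.sum_comm]
  have b1 : ∑ v : Fin m ⊕ Fin m, ∑ ω ∈ Cyl L g, ∑ j ∈ Finset.range (ℓ + 1),
        pathSum ω (fun b L => ∑ x : Fin n, lastW (f ω) x b L) j v L
        ≤ 2 * m * (K * s * (1 / (m:ℝ)^2) ^ L.length) := by
    refine (Finset.sum_le_sum fun v _ => pathSum_bound_range hm
      (fun ω b L => ∑ x : Fin n, lastW (f ω) x b L) s hs u ℓ K hK H1 L g v hL (by omega)).trans ?_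
    simp; ring_nf; exact le_rfl
  have b2 := attach_bound hm (fun ω b L => ∑ v : Fin m ⊕ Fin m, ∑ x : Fin n,
    pairW ω ℓ (f ω) v x b L) ((2 * K + 1) * u * s) (by positivity) (u - ℓ) ℓ K hK H2 L g hL (by omega)
  have hlu : (L.length : ℝ) ≤ u := by exact_mod_cast (by omega : L.length ≤ u)
  have b3 : (L.length:ℝ) * (2 * K * ((2 * K + 1) * u * s) * (1 / (m:ℝ)^2) ^ L.length)
      ≤ u * (2 * K * ((2 * K + 1) * u * s) * (1 / (m:ℝ)^2) ^ L.length) := by gcongr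
  refine (add_le_add b1 (b2.trans b3)).trans (le_of_eq ?_)
  ring

theorem tot_nonneg {n m : ℕ} (ω : Fin n → Fin m × Fin m) : 0 ≤ tot ω :=
  Finset.sum_nonneg fun _ _ => Nat.cast_nonneg _

theorem moment_bound {n m : ℕ} (hm : 0 < m) (U ℓ : ℕ) (K : ℝ)
    (hK : ∑ j ∈ Finset.range (ℓ + 1), ((n:ℝ) / m) ^ j ≤ K) (k : ℕ) :
    ∀ (L : List (Fin n)) (g : Fin n → Fin m × Fin m), L.Nodup → L.length + 2 * ℓ * k ≤ U →
      ∑ ω ∈ Cyl L g, (if Short ℓ ω then tot ω ^ k else 0)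
        ≤ (2 * m * K + (2 * K) * (2 * K + 1) * (U:ℝ) ^ 2) ^ k * ((m:ℝ)^2)^n
          * (1 / (m:ℝ)^2) ^ L.length := by
  have hK0 : 0 ≤ K := le_trans (Finset.sum_nonneg fun j _ => by positivity) hK
  induction k with
  | zero =>
    intro L g hL _
    rw [pow_zero, one_mul, ← card_cyl hm L hL g]
    refine (Finset.sum_le_sum (g := fun _ => (1:ℝ)) fun ω _ => ?_).trans (by simp)
    split_ifs <;> simp
  | succ k ih =>
    intro L g hL hu
    have e : 2 * ℓ * (k + 1) = 2 * ℓ * k + 2 * ℓ := by ring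
    have := step_bound hm (fun ω => if Short ℓ ω then tot ω ^ k else 0) (fun ω => by
      split_ifs
      · exact pow_nonneg (tot_nonneg ω) k
      · exact le_rfl)
      ((2 * m * K + (2 * K) * (2 * K + 1) * (U:ℝ) ^ 2) ^ k * ((m:ℝ)^2)^n) (by positivity)
      (U - 2 * ℓ * k) ℓ K hK (fun L g h1 h2 => ih L g h1 (by omega)) L g hL (by omega)
    have hle : ((U - 2 * ℓ * k : ℕ) : ℝ) ≤ U := by exact_mod_cast Nat.sub_le _ _
    have e2 : ∑ ω ∈ Cyl L g, (if Short ℓ ω then tot ω ^ (k+1) else 0)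
      = ∑ ω ∈ Cyl L g, (if Short ℓ ω then tot ω * (if Short ℓ ω then tot ω ^ k else 0) else 0) := by
      refine Finset.sum_congr rfl fun ω _ => ?_
      split_ifs
      · ring
      · rfl
    rw [e2]
    refine this.trans ?_
    refine mul_le_mul_of_nonneg_right ?_ (by positivity)
    rw [pow_succ' _ k, mul_assoc (2 * (m:ℝ) * K + (2 * K) * (2 * K + 1) * (U:ℝ) ^ 2)]
    refine mul_le_mul_of_nonneg_right ?_ (by positivity)
    gcongr

theorem cyl_nil {n m : ℕ} (g : Fin n → Fin m × Fin m) : Cyl [] g = Finset.univ := by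
  simp [Cyl]

theorem long_bound {n m : ℕ} (hm : 0 < m) (ℓ : ℕ) :
    ((Finset.univ.filter (fun ω : Fin n → Fin m × Fin m => ¬ Short ℓ ω)).card : ℝ)
      ≤ 2 * m * ((n:ℝ) / m) ^ (ℓ + 1) * ((m:ℝ)^2)^n := by
  have h1 : ∀ ω : Fin n → Fin m × Fin m, (if ¬ Short ℓ ω then (1:ℝ) else 0) ≤
      ∑ v : Fin m ⊕ Fin m, pathSum ω (fun _ _ => 1) (ℓ + 1) v [] := by
    intro ω
    have hnn : ∀ v, 0 ≤ pathSum ω (fun _ _ => 1) (ℓ + 1) v [] :=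
      fun v => pathSum_nonneg ω _ (fun _ _ => zero_le_one) _ _ _
    by_cases h : ¬ Short ℓ ω
    · rw [if_pos h]
      unfold Short at h
      push Not at h
      obtain ⟨v, xs, b, hp, hn, hl⟩ := h
      have e := List.take_append_drop (ℓ + 1) xs
      rw [← e, isPath_append] at hp
      obtain ⟨c, hp, -⟩ := hp
      have := le_pathSum ω (fun _ _ => 1) (fun _ _ => zero_le_one) (xs.take (ℓ + 1)) v c [] hp
        (hn.sublist (List.take_sublist _ _)) (by simp)
      rw [List.length_take_of_le (by omega)] at this
      exact this.trans (Finset.single_le_sum (f := fun v => pathSum ω (fun _ _ => 1) (ℓ + 1) v [])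
        (fun v _ => hnn v) (Finset.mem_univ v))
    · rw [if_neg h]
      exact Finset.sum_nonneg fun v _ => hnn v
  have h2 : ((Finset.univ.filter (fun ω : Fin n → Fin m × Fin m => ¬ Short ℓ ω)).card : ℝ)
      = ∑ ω : Fin n → Fin m × Fin m, (if ¬ Short ℓ ω then (1:ℝ) else 0) := by
    rw [Finset.card_filter]; push_cast; rfl
  rw [h2]
  refine (Finset.sum_le_sum fun ω _ => h1 ω).trans ?_
  rw [Finset.sum_comm]
  have h3 : ∀ v : Fin m ⊕ Fin m, ∑ ω : Fin n → Fin m × Fin m,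
      pathSum ω (fun _ _ => 1) (ℓ + 1) v [] ≤ ((n:ℝ) / m) ^ (ℓ + 1) * ((m:ℝ)^2)^n := by
    intro v
    have := pathSum_bound (n := n) hm (fun _ _ _ => 1) (((m:ℝ)^2)^n) (by positivity) (ℓ + 1) (by
      intro L g b hL _
      rw [← card_cyl hm L hL g]; simp) (ℓ + 1) [] (fun _ => (⟨0, hm⟩, ⟨0, hm⟩)) v (by simp) (by simp)
    rw [cyl_nil] at this
    simpa using this
  refine (Finset.sum_le_sum fun v _ => h3 v).trans ?_
  simp; ring_nf; exact le_rfl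

theorem pr_eq {n m : ℕ} (c : ℝ) :
    cuckooPr n m (fun ω =>
          c < (1 / (2 * (m : ℝ))) * ∑ v : Fin m ⊕ Fin m, (cuckooC n m ω.1 ω.2 v : ℝ))
    = ((Finset.univ.filter (fun ω : Fin n → Fin m × Fin m =>
        c < (1 / (2 * (m : ℝ))) * tot ω)).card : ℝ) / ((m:ℝ)^2)^n := by
  unfold cuckooPr
  congr 1
  · rw [← Fintype.card_subtype, ← Nat.card_eq_fintype_card]
    congr 1
    refine Nat.card_congr (Equiv.subtypeEquiv (Equiv.arrowProdEquivProdArrow (Fin n)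
      (fun _ => Fin m) (fun _ => Fin m)).symm ?_)
    intro ω
    rfl
  · simp; ring

theorem main_bound {n m : ℕ} (hm : 0 < m) (ℓ k : ℕ) (K D : ℝ) (hD : 0 < D)
    (hK : ∑ j ∈ Finset.range (ℓ + 1), ((n:ℝ) / m) ^ j ≤ K)
    (hB : 2 * m * K + (2 * K) * (2 * K + 1) * ((2 * ℓ * k : ℕ):ℝ) ^ 2 ≤ m * D) :
    cuckooPr n m (fun ω =>
          Real.exp 1 * D / 2 < (1 / (2 * (m : ℝ))) *
            ∑ v : Fin m ⊕ Fin m, (cuckooC n m ω.1 ω.2 v : ℝ))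
      ≤ Real.exp (-k) + 2 * m * ((n:ℝ) / m) ^ (ℓ + 1) := by
  have hm' : (0:ℝ) < m := by exact_mod_cast hm
  have hK0 : 0 ≤ K := le_trans (Finset.sum_nonneg fun j _ => by positivity) hK
  rw [pr_eq, div_le_iff₀ (by positivity), add_mul]
  set E := Finset.univ.filter (fun ω : Fin n → Fin m × Fin m =>
        Real.exp 1 * D / 2 < (1 / (2 * (m : ℝ))) * tot ω) with hE
  have h1 := long_bound (n := n) hm ℓ
  have h2 := moment_bound (n := n) hm (2 * ℓ * k) ℓ K hK k [] (fun _ => (⟨0, hm⟩, ⟨0, hm⟩))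
    (by simp) (by simp)
  rw [cyl_nil] at h2
  simp only [List.length_nil, pow_zero, mul_one] at h2
  have hM : 0 < (m * D * Real.exp 1) ^ k := by positivity
  have h3 : ((E.filter (fun ω => Short ℓ ω)).card : ℝ) * (m * D * Real.exp 1) ^ k
      ≤ (m * D) ^ k * ((m:ℝ)^2)^n := by
    calc _ = ∑ ω ∈ E.filter (fun ω => Short ℓ ω), (m * D * Real.exp 1) ^ k := by simp
      _ ≤ ∑ ω ∈ E.filter (fun ω => Short ℓ ω), (if Short ℓ ω then tot ω ^ k else 0) := by
          refine Finset.sum_le_sum fun ω hω => ?_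
          simp only [hE, Finset.mem_filter, Finset.mem_univ, true_and] at hω
          rw [if_pos hω.2]
          have := hω.1
          rw [one_div, inv_mul_eq_div, lt_div_iff₀ (by positivity)] at this
          refine pow_le_pow_left₀ (by positivity) ?_ k
          linarith
      _ ≤ ∑ ω, (if Short ℓ ω then tot ω ^ k else 0) := by
          refine Finset.sum_le_sum_of_subset_of_nonneg (Finset.subset_univ _) fun ω _ _ => ?_
          split_ifs
          · exact pow_nonneg (tot_nonneg ω) k
          · exact le_rfl
      _ ≤ _ := h2
      _ ≤ _ := by gcongr
  have h4 : ((E.filter (fun ω => Short ℓ ω)).card : ℝ) ≤ Real.exp (-k) * ((m:ℝ)^2)^n := by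
    rw [← le_div_iff₀ hM] at h3
    refine h3.trans (le_of_eq ?_)
    rw [mul_pow _ (Real.exp 1), Real.exp_neg, ← Real.exp_nat_mul, mul_one]
    field_simp
  have h5 : (E.card : ℝ) ≤ ((E.filter (fun ω => Short ℓ ω)).card : ℝ)
      + ((Finset.univ.filter (fun ω : Fin n → Fin m × Fin m => ¬ Short ℓ ω)).card : ℝ) := by
    rw [← Finset.card_filter_add_card_filter_not (s := E) (fun ω => Short ℓ ω)]
    push_cast
    gcongr
    exact Finset.subset_univ _
  linarith

theorem eventually_poly (C : ℝ) :
    ∀ᶠ n : ℕ in Filter.atTop, C * ((Real.log n) ^ 2 + 1) ^ 4 ≤ n := by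
  have h : (fun x : ℝ => C * ((Real.log x) ^ 2 + 1) ^ 4) =o[Filter.atTop] (fun x : ℝ => x) := by
    have h8 : ∀ j : ℕ, (fun x : ℝ => (Real.log x) ^ j) =o[Filter.atTop] (fun x : ℝ => x) := by
      intro j
      have := Real.isLittleO_pow_log_id_atTop (n := j)
      exact this
    have e : (fun x : ℝ => C * ((Real.log x) ^ 2 + 1) ^ 4) = fun x : ℝ =>
      C * ((Real.log x) ^ 8 + 4 * (Real.log x) ^ 6 + 6 * (Real.log x) ^ 4
        + 4 * (Real.log x) ^ 2 + (Real.log x) ^ 0) := by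
      funext x; ring
    rw [e]
    exact (((((h8 8).add ((h8 6).const_mul_left 4)).add ((h8 4).const_mul_left 6)).add
      ((h8 2).const_mul_left 4)).add (h8 0)).const_mul_left C
  have h1 := (h.bound zero_lt_one)
  have h2 := tendsto_natCast_atTop_atTop (R := ℝ) |>.eventually h1
  filter_upwards [h2] with n hn
  rw [one_mul, Real.norm_eq_abs, Real.norm_eq_abs, Nat.abs_cast] at hn
  exact (le_abs_self _).trans hn

end Cuckoo

/-- If `(1+ε)·n ≤ m` then with probability at least `1 − n^{−c·log n}`, the average
component size `(1/(2m))·∑_v C(v)` over all `2m` vertices is at most a constant `c₃`,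
where `c₃, c > 0` and the threshold `n₀` depend only on `ε`. -/
theorem cuckoo_average_component_size_bound (ε : ℝ) (hε : 0 < ε) :
    ∃ c₃ c : ℝ, 0 < c₃ ∧ 0 < c ∧ ∃ n₀ : ℕ, ∀ n m : ℕ, n₀ ≤ n → (1 + ε) * n ≤ m →
      cuckooPr n m (fun ω =>
          c₃ < (1 / (2 * (m : ℝ))) * ∑ v : Fin m ⊕ Fin m, (cuckooC n m ω.1 ω.2 v : ℝ))
        ≤ (n : ℝ) ^ (-(c * Real.log n)) := by
  obtain ⟨K, hKdef⟩ : ∃ K : ℝ, K = (1 + ε) / ε := ⟨_, rfl⟩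
  have hK0 : 0 < K := by rw [hKdef]; positivity
  obtain ⟨D, hDdef⟩ : ∃ D : ℝ, D = 2 * K + 2 * K * (2 * K + 1) := ⟨_, rfl⟩
  have hD : 0 < D := by rw [hDdef]; positivity
  obtain ⟨β, hβdef⟩ : ∃ β : ℝ, β = Real.log (1 + ε) := ⟨_, rfl⟩
  have hβ : 0 < β := by rw [hβdef]; exact Real.log_pos (by linarith)
  obtain ⟨c, hcdef⟩ : ∃ c : ℝ, c = min 1 β / 2 := ⟨_, rfl⟩
  have hc : 0 < c := by rw [hcdef]; positivity
  have hc1 : 2 * c ≤ 1 := by rw [hcdef]; linarith [min_le_left 1 β]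
  have hc2 : 2 * c ≤ β := by rw [hcdef]; linarith [min_le_right 1 β]
  refine ⟨Real.exp 1 * D / 2, c, by positivity, hc, ?_⟩
  have hlog : ∀ᶠ n : ℕ in Filter.atTop, max 2 (2 / c) ≤ Real.log n :=
    (Real.tendsto_log_atTop.comp (tendsto_natCast_atTop_atTop (R := ℝ))).eventually_ge_atTop _
  obtain ⟨n₀, hn₀⟩ := Filter.eventually_atTop.mp
    ((Cuckoo.eventually_poly 4).and (hlog.and (Filter.eventually_ge_atTop 1)))
  refine ⟨n₀, fun n m hn hnm => ?_⟩
  obtain ⟨hpoly, hl, hn1⟩ := hn₀ n hn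
  have hn1' : (1:ℝ) ≤ n := by exact_mod_cast hn1
  have hnm' : (n:ℝ) ≤ m := by nlinarith
  have hm0 : (0:ℝ) < m := by linarith
  have hm : 0 < m := by exact_mod_cast hm0
  obtain ⟨x, hx⟩ : ∃ x : ℝ, x = Real.log n := ⟨_, rfl⟩
  rw [← hx] at hpoly hl
  have hx2 : 2 ≤ x := (le_max_left _ _).trans hl
  have hxc : 2 / c ≤ x := (le_max_right _ _).trans hl
  rw [div_le_iff₀ hc] at hxc
  set k := ⌈x ^ 2⌉₊ with hk
  have hk1 : x ^ 2 ≤ k := Nat.le_ceil _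
  have hk2 : (k:ℝ) ≤ x ^ 2 + 1 := (Nat.ceil_lt_add_one (by positivity)).le
  have hlam : (n:ℝ) / m ≤ (1 + ε)⁻¹ := by
    rw [div_le_iff₀ hm0, inv_mul_eq_div, le_div_iff₀ (by positivity)]; linarith
  have hlam0 : 0 ≤ (n:ℝ) / m := by positivity
  have hq1 : (1 + ε)⁻¹ < 1 := inv_lt_one_of_one_lt₀ (by linarith)
  have hK : ∑ j ∈ Finset.range (k + 1), ((n:ℝ) / m) ^ j ≤ K := by
    calc _ ≤ ∑ j ∈ Finset.range (k + 1), ((1 + ε)⁻¹) ^ j := by gcongr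
      _ ≤ ∑' j : ℕ, ((1 + ε)⁻¹) ^ j :=
        (summable_geometric_of_lt_one (by positivity) hq1).sum_le_tsum _ (fun j _ => by positivity)
      _ = (1 - (1 + ε)⁻¹)⁻¹ := tsum_geometric_of_lt_one (by positivity) hq1
      _ = K := by 
        rw [hKdef, inv_eq_one_div (1 + ε), one_sub_div (by positivity), inv_div]
        congr 1; ring
  have hU : ((2 * k * k : ℕ):ℝ) ^ 2 ≤ m := by
    push_cast
    calc (2 * (k:ℝ) * k) ^ 2 = 4 * (k:ℝ) ^ 4 := by ring
      _ ≤ 4 * (x ^ 2 + 1) ^ 4 := by gcongr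
      _ ≤ n := hpoly
      _ ≤ m := hnm'
  have hB : 2 * m * K + (2 * K) * (2 * K + 1) * ((2 * k * k : ℕ):ℝ) ^ 2 ≤ m * D := by
    have : (2 * K) * (2 * K + 1) * ((2 * k * k : ℕ):ℝ) ^ 2 ≤ (2 * K) * (2 * K + 1) * m := by gcongr
    rw [hDdef]; linarith
  refine (Cuckoo.main_bound hm k k K D hD hK hB).trans ?_
  rw [Real.rpow_def_of_pos (by linarith), ← hx]
  have hnx : (n:ℝ) = Real.exp x := by rw [hx, Real.exp_log (by linarith)]
  have t1 : Real.exp (-k) ≤ Real.exp (x - 2 * c * x ^ 2) := by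
    apply Real.exp_le_exp.mpr
    nlinarith [sq_nonneg x]
  have t2 : 2 * m * ((n:ℝ) / m) ^ (k + 1) ≤ 2 * Real.exp (x - 2 * c * x ^ 2) := by
    have e : 2 * m * ((n:ℝ) / m) ^ (k + 1) = 2 * (n * ((n:ℝ) / m) ^ k) := by
      rw [pow_succ]; field_simp
    rw [e]
    have e1 : ((n:ℝ) / m) ^ k ≤ Real.exp (- (2 * c * x ^ 2)) := by
      calc ((n:ℝ) / m) ^ k ≤ ((1 + ε)⁻¹) ^ k := by gcongr
        _ = Real.exp (-(k * β)) := by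
          rw [Real.exp_neg, hβdef, Real.exp_nat_mul, Real.exp_log (by positivity), inv_pow]
        _ ≤ _ := by
          apply Real.exp_le_exp.mpr
          nlinarith [sq_nonneg x, mul_le_mul hk1 hc2 (by positivity) (by positivity)]
    calc 2 * (n * ((n:ℝ) / m) ^ k) ≤ 2 * (Real.exp x * Real.exp (- (2 * c * x ^ 2))) := by
          rw [hnx] at *; gcongr
      _ = _ := by rw [← Real.exp_add]; ring_nf
  have t3 : 3 * Real.exp (x - 2 * c * x ^ 2) ≤ Real.exp (x * -(c * x)) := by
    have h3 : (3:ℝ) ≤ Real.exp x := by linarith [Real.add_one_le_exp x]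
    calc 3 * Real.exp (x - 2 * c * x ^ 2) ≤ Real.exp x * Real.exp (x - 2 * c * x ^ 2) := by gcongr
      _ = Real.exp (x + (x - 2 * c * x ^ 2)) := by rw [Real.exp_add]
      _ ≤ _ := by
        apply Real.exp_le_exp.mpr
        nlinarith
  linarith
end
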